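/- arXiv:1712.03629 — 2 statements merged into one kernel-verified Lean document; each statement's English description precedes it below -/
import Mathlib

section
/- Let B be a finite-dimensional central division algebra over a nonarchimedean local field K, let L ⊆ B be a K-subalgebra which is a division algebra, and let C be the centralizer of L in B. Then e(L/K) = f(B/C) and f(L/K) = e(B/C), where e and f denote ramification index and residual degree respectively. -/
/-!
Let `v` be the valuation of `B`. Lifting a basis of the residue field of a division algebra
`K ⊆ S ⊆ B` and multiplying by the powers `π_S ^ j`, `j < e(S/K)`, gives a `K`-basis of `S`: linear
independence is seen on valuations, and spanning follows by successive approximation, because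
finite-dimensional subspaces of `B` are closed. Hence `[S : K] = e(S/K) f(S/K)`.

If `v(x) = v(π_B) ^ d`, conjugation by `x` acts on the residue field as the `d`-th power of
conjugation by `π_B`. A residue class fixed by the latter comes from `K`: a lift `b` almost commutes with `B`, and its
powers `b ^ (|k| ^ s)`, where `k` is the residue field of `B`, stay in the same class and
commute with `B` more and more closely, so they approach `K`. Hence, if `x` commutes with `S` and
`v(x) = v(π_B) ^ d`, the residue field of `S` is fixed by the `d`-th power of an automorphism whose
fixed field is at most the residue field of `K`, and so `f(S/K) ≤ d`.

With `S = L`, `x = π_C` this is `f(L/K) ≤ e(B/C)`; with `S = C`, `x = π_L` it is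
`f(C/K) ≤ e(B/L)`, so `e(L/K) f(C/K) ≤ e(B/K)`. Comparing dimensions of `K(π_B)` and its centralizer
gives `e(B/K) ≤ f(B/K)`, and `[L : K] [C : K] = [B : K]` turns both inequalities
`e(L/K) f(C/K) ≤ f(B/K)` and `f(L/K) ≤ e(B/C)` into equalities.
-/

/-- The number of residue classes of the integers of a sub-division-ring `S`
(the elements of `S` of absolute value ≤ 1) modulo the maximal ideal
(elements of absolute value < 1).  For the ring of integers of a division
subalgebra of a local division algebra this is the cardinality of its residue
field. -/
noncomputable def resCard {B : Type*} [DivisionRing B]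
    (ρ : AbsoluteValue B ℝ) (S : Set B) : ℕ :=
  Nat.card (Quot (fun x y : {b : B // b ∈ S ∧ ρ b ≤ 1} => ρ (x.1 - y.1) < 1))

namespace LocalDivisionAlgebra

open TensorProduct MulOpposite Module

variable {K B : Type*} [Field K] [DivisionRing B] [Algebra K B]

section DoubleCentralizer

/-- The action of `L ⊗ Bᵐᵒᵖ` on `B` by `l ⊗ r : x ↦ l * x * r`. -/
noncomputable def bimul (L : Subalgebra K B) : L ⊗[K] Bᵐᵒᵖ →ₐ[K] Module.End K B :=
  (AlgHom.mulLeftRight K B).comp (Algebra.TensorProduct.map L.val (AlgHom.id K Bᵐᵒᵖ))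

variable (L : Subalgebra K B)

@[simp]
lemma bimul_tmul (l : L) (r : Bᵐᵒᵖ) (x : B) : bimul L (l ⊗ₜ r) x = l * x * r.unop := by
  simp [bimul]

lemma bimul_centralizer_mul (t : L ⊗[K] Bᵐᵒᵖ) {c : B}
    (hc : c ∈ Subalgebra.centralizer K (L : Set B)) (x : B) :
    bimul L t (c * x) = c * bimul L t x := by
  induction t with
  | zero => simp
  | tmul l r => simp only [bimul_tmul, ← mul_assoc, hc l l.2]
  | add s t hs ht => simp only [map_add, LinearMap.add_apply, hs, ht, mul_add]

instance : IsSimpleModule (bimul L).range B := by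
  rw [isSimpleModule_iff_toSpanSingleton_surjective]
  refine ⟨inferInstance, fun x hx y => ⟨⟨_, 1 ⊗ₜ op (x⁻¹ * y), rfl⟩, ?_⟩⟩
  change bimul L (1 ⊗ₜ op (x⁻¹ * y)) x = y
  simp [mul_inv_cancel_left₀ hx]

lemma exists_mem_centralizer_eq_mul (φ : Module.End (bimul L).range B) :
    ∃ c ∈ Subalgebra.centralizer K (L : Set B), ∀ x, φ x = c * x := by
  have hφ (t : L ⊗[K] Bᵐᵒᵖ) (x : B) : φ (bimul L t x) = bimul L t (φ x) :=
    φ.map_smul ⟨bimul L t, t, rfl⟩ x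
  have hr (x y : B) : φ (x * y) = φ x * y := by simpa using hφ (1 ⊗ₜ op y) x
  have hl (l : L) (x : B) : φ (l * x) = l * φ x := by simpa using hφ (l ⊗ₜ 1) x
  refine ⟨φ 1, fun l hl' => ?_, fun x => by rw [← hr, one_mul]⟩
  rw [← hl ⟨l, hl'⟩, ← hr, mul_one, one_mul]

lemma exists_bimul_eqOn (g : B →ₗ[Subalgebra.centralizer K (L : Set B)] B) (s : Finset B) :
    ∃ t : L ⊗[K] Bᵐᵒᵖ, ∀ x ∈ s, bimul L t x = g x := by
  have hg (φ : Module.End (bimul L).range B) (x : B) : g (φ x) = φ (g x) := by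
    obtain ⟨c, hc, h⟩ := exists_mem_centralizer_eq_mul L φ
    rw [h, h]
    exact g.map_smul ⟨c, hc⟩ x
  obtain ⟨⟨_, t, rfl⟩, ht⟩ := jacobson_density (R := (bimul L).range)
    { g.toAddMonoidHom with map_smul' := hg } s
  exact ⟨t, fun x hx => (ht x hx).symm⟩

lemma exists_mulLeftRight_eqOn [Algebra.IsCentral K B] (g : B →ₗ[K] B) (s : Finset B) :
    ∃ t : B ⊗[K] Bᵐᵒᵖ, ∀ x ∈ s, AlgHom.mulLeftRight K B t x = g x := by
  have hg (c : Subalgebra.centralizer K ((⊤ : Subalgebra K B) : Set B)) (x : B) :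
      g (c • x) = c • g x := by
    obtain ⟨c, hc⟩ := c
    rw [Algebra.coe_top, Subalgebra.centralizer_univ, Algebra.IsCentral.center_eq_bot] at hc
    obtain ⟨k, rfl⟩ := hc
    exact (congrArg g (Algebra.smul_def k x).symm).trans
      ((g.map_smul k x).trans (Algebra.smul_def k _))
  obtain ⟨t, ht⟩ := exists_bimul_eqOn ⊤ { g with map_smul' := hg } s
  exact ⟨_, ht⟩

variable [FiniteDimensional K B]

lemma mulLeftRight_surjective [Algebra.IsCentral K B] :
    Function.Surjective (AlgHom.mulLeftRight K B) := by
  classical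
  intro g
  obtain ⟨t, ht⟩ := exists_mulLeftRight_eqOn g (Finset.univ.image (finBasis K B))
  exact ⟨t, (finBasis K B).ext fun i => ht _ (Finset.mem_image_of_mem _ (Finset.mem_univ i))⟩

lemma bimul_injective [Algebra.IsCentral K B] : Function.Injective (bimul L) := by
  have hB : Function.Injective (AlgHom.mulLeftRight K B) := by
    refine (LinearMap.injective_iff_surjective_of_finrank_eq_finrank
      (f := (AlgHom.mulLeftRight K B).toLinearMap) ?_).2 mulLeftRight_surjective
    rw [finrank_tensorProduct, finrank_linearMap, (MulOpposite.opLinearEquiv K).symm.finrank_eq]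
  exact hB.comp
    (Module.Flat.rTensor_preserves_injective_linearMap L.val.toLinearMap Subtype.val_injective)

lemma range_restrictScalars_centralizer :
    LinearMap.range
        (LinearMap.restrictScalarsₗ K (Subalgebra.centralizer K (L : Set B)) B B K) =
      LinearMap.range (bimul L).toLinearMap := by
  classical
  apply le_antisymm
  · rintro _ ⟨g, rfl⟩
    obtain ⟨t, ht⟩ := exists_bimul_eqOn L g (Finset.univ.image (finBasis K B))
    exact ⟨t, (finBasis K B).ext fun i => ht _ (Finset.mem_image_of_mem _ (Finset.mem_univ i))⟩
  · rintro _ ⟨t, rfl⟩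
    exact ⟨{ bimul L t with map_smul' := fun c => bimul_centralizer_mul L t c.2 }, rfl⟩

theorem finrank_mul_finrank_centralizer [Algebra.IsCentral K B] :
    finrank K L * finrank K (Subalgebra.centralizer K (L : Set B)) = finrank K B := by
  let C := Subalgebra.centralizer K (L : Set B)
  let : DivisionRing C := divisionRingOfFiniteDimensional K C
  have : Module.Finite C B := Module.Finite.of_restrictScalars_finite K C B
  have h := congrArg (fun W : Submodule K (Module.End K B) => finrank K W)
    (range_restrictScalars_centralizer L)
  rw [LinearMap.finrank_range_of_inj (LinearMap.restrictScalars_injective K),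
    LinearMap.finrank_range_of_inj (bimul_injective L), finrank_linearMap, finrank_tensorProduct,
    (MulOpposite.opLinearEquiv K).symm.finrank_eq] at h
  have hCB : finrank C B = finrank K L := Nat.eq_of_mul_eq_mul_right finrank_pos h
  rw [← hCB, mul_comm, finrank_mul_finrank K C B]

end DoubleCentralizer

variable {Γ₀ : Type*} [LinearOrderedCommGroupWithZero Γ₀] (v : Valuation B Γ₀)

section ResidueField

instance : (v.ltIdeal 1).IsTwoSided where
  mul_mem_of_left {x} y hx := by
    change v ((x : B) * y) < 1
    rw [map_mul]
    exact mul_lt_one_of_lt_of_le hx y.2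

/-- The residue division ring of `v`: its ring of integers modulo the elements of valuation less
than one. -/
abbrev ResidueField : Type _ := v.integer ⧸ v.ltIdeal 1

/-- The reduction map. -/
abbrev residue : v.integer →+* ResidueField v := Ideal.Quotient.mk (v.ltIdeal 1)

variable {v}

lemma residue_eq_zero_iff {x : v.integer} : residue v x = 0 ↔ v (x : B) < 1 :=
  Ideal.Quotient.eq_zero_iff_mem

lemma residue_eq_iff {x y : v.integer} : residue v x = residue v y ↔ v (x - y : B) < 1 := by
  rw [← sub_eq_zero, ← map_sub, residue_eq_zero_iff]
  rfl

lemma residue_ne_zero_iff {x : v.integer} : residue v x ≠ 0 ↔ v (x : B) = 1 := by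
  rw [Ne, residue_eq_zero_iff, not_lt]
  exact ⟨fun h => le_antisymm x.2 h, fun h => h.ge⟩

variable (v) in
lemma isUnit_or_eq_zero (a : ResidueField v) : IsUnit a ∨ a = 0 := by
  obtain ⟨x, rfl⟩ := Ideal.Quotient.mk_surjective a
  rw [or_iff_not_imp_right]
  intro h
  have hx : v (x : B) = 1 := residue_ne_zero_iff.1 h
  have hx0 : (x : B) ≠ 0 := fun h0 => by simp [h0] at hx
  refine IsUnit.map (residue v) (x := x) ⟨⟨x, ⟨(x : B)⁻¹, ?_⟩, ?_, ?_⟩, rfl⟩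
  · rw [Valuation.mem_integer_iff, map_inv₀, hx, inv_one]
  · exact Subtype.ext (mul_inv_cancel₀ hx0)
  · exact Subtype.ext (inv_mul_cancel₀ hx0)

instance : Nontrivial (ResidueField v) :=
  ⟨1, 0, fun h => (residue_ne_zero_iff (v := v) (x := 1)).2 v.map_one h⟩

noncomputable instance : DivisionRing (ResidueField v) :=
  DivisionRing.ofIsUnitOrEqZero (isUnit_or_eq_zero v)

variable [Finite (ResidueField v)]
variable (v)

/-- The residue field of a subalgebra `S` of `B`, inside that of `B`. -/
noncomputable def residueSubfield (S : Subalgebra K B) : Subfield (ResidueField v) where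
  toSubring := (S.toSubring.comap v.integer.subtype).map (residue v)
  inv_mem' x hx := by
    obtain rfl | h0 := eq_or_ne x 0
    · simpa using hx
    obtain ⟨n, hn, h1⟩ := isOfFinOrder_iff_pow_eq_one.1 (isOfFinOrder_of_finite (Units.mk0 x h0))
    have hx1 : x * x ^ (n - 1) = 1 := by
      rw [mul_pow_sub_one hn.ne']
      exact congrArg Units.val h1
    rw [inv_eq_of_mul_eq_one_right hx1]
    exact Subring.pow_mem _ hx _

variable {v}

lemma mem_residueSubfield_iff {S : Subalgebra K B} {a : ResidueField v} :
    a ∈ residueSubfield v S ↔ ∃ x : v.integer, (x : B) ∈ S ∧ residue v x = a :=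
  Iff.rfl

lemma residueSubfield_mono {S T : Subalgebra K B} (h : S ≤ T) :
    residueSubfield v S ≤ residueSubfield v T := by
  rintro _ ⟨x, hx, rfl⟩
  exact ⟨x, h hx, rfl⟩

end ResidueField

section Uniformizer

/-- `π` is a uniformizer of the subalgebra `S`: its valuation is the largest one below `1` that is
attained on `S`. -/
structure IsUniformizer (S : Subalgebra K B) (π : B) : Prop where
  mem : π ∈ S
  ne_zero : π ≠ 0
  lt_one : v π < 1
  le_of_lt_one : ∀ x ∈ S, v x < 1 → v x ≤ v π

variable {v} {S T : Subalgebra K B} {π : B}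

lemma IsUniformizer.of_le (hπ : IsUniformizer v T π) (h : S ≤ T) (hS : π ∈ S) :
    IsUniformizer v S π :=
  ⟨hS, hπ.ne_zero, hπ.lt_one, fun x hx => hπ.le_of_lt_one x (h hx)⟩

lemma inv_mem_bot {x : B} (hx : x ∈ (⊥ : Subalgebra K B)) : x⁻¹ ∈ (⊥ : Subalgebra K B) :=
  Algebra.IsIntegral.inv_mem hx

lemma zpow_mem_of_inv_mem (hS : ∀ x ∈ S, x⁻¹ ∈ S) {x : B} (hx : x ∈ S) (n : ℤ) : x ^ n ∈ S := by
  cases n with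
  | ofNat n => simpa using pow_mem hx n
  | negSucc n => rw [zpow_negSucc]; exact hS _ (pow_mem hx _)

variable [MulArchimedean Γ₀]

lemma exists_zpow_near {a b : Γ₀} (ha : a ≠ 0) (hb : b ≠ 0) (hb1 : b < 1) :
    ∃ n : ℤ, b ^ (n + 1) < a ∧ a ≤ b ^ n := by
  obtain ⟨n, ⟨h₁, h₂⟩, -⟩ := existsUnique_zpow_near_of_one_lt (a := (Units.mk0 b hb)⁻¹)
    (one_lt_inv'.2 hb1) (Units.mk0 a ha)⁻¹
  rw [inv_zpow, inv_le_inv_iff] at h₁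
  rw [inv_zpow, inv_lt_inv_iff] at h₂
  have h₁' := Units.val_le_val.2 h₁
  have h₂' := Units.val_lt_val.2 h₂
  exact ⟨n, by simpa using h₂', by simpa using h₁'⟩

lemma IsUniformizer.exists_zpow (hπ : IsUniformizer v S π) (hS : ∀ x ∈ S, x⁻¹ ∈ S) {x : B}
    (hx : x ∈ S) (hx0 : x ≠ 0) : ∃ n : ℤ, v x = v π ^ n := by
  have hvπ : v π ≠ 0 := (v.ne_zero_iff).2 hπ.ne_zero
  obtain ⟨n, hlt, hle⟩ := exists_zpow_near ((v.ne_zero_iff).2 hx0) hvπ hπ.lt_one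
  refine ⟨n, hle.antisymm (not_lt.1 fun h => hlt.not_ge ?_)⟩
  have hpos : 0 < v π ^ n := zpow_pos (zero_lt_iff.2 hvπ) n
  have hy := hπ.le_of_lt_one (x * (π ^ n)⁻¹)
    (mul_mem hx (hS _ (zpow_mem_of_inv_mem hS hπ.mem n)))
  rw [map_mul, map_inv₀, map_zpow₀, ← div_eq_mul_inv, div_lt_one₀ hpos, div_le_iff₀ hpos] at hy
  rw [zpow_add_one₀ hvπ, mul_comm]
  exact hy h

lemma IsUniformizer.exists_pow (hπ : IsUniformizer v S π) (hS : ∀ x ∈ S, x⁻¹ ∈ S) {x : B}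
    (hx : x ∈ S) (hx0 : x ≠ 0) (hx1 : v x < 1) : ∃ d : ℕ, d ≠ 0 ∧ v x = v π ^ d := by
  obtain ⟨n, hn⟩ := hπ.exists_zpow hS hx hx0
  have hpos : 0 < n := (zpow_lt_one_iff_right_of_lt_one₀
    (zero_lt_iff.2 (v.ne_zero_iff.2 hπ.ne_zero)) hπ.lt_one).1 (hn ▸ hx1)
  lift n to ℕ using hpos.le
  exact ⟨n, by lia, by rw [hn, zpow_natCast]⟩

end Uniformizer

section Span

variable {v}

lemma exists_forall_map_mulLeftRight_le (t : B ⊗[K] Bᵐᵒᵖ) :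
    ∃ M : Γ₀, ∀ x, v (AlgHom.mulLeftRight K B t x) ≤ M * v x := by
  induction t with
  | zero => exact ⟨0, fun x => by simp⟩
  | tmul a b =>
    refine ⟨v a * v b.unop, fun x => ?_⟩
    rw [AlgHom.mulLeftRight_apply, map_mul, map_mul, mul_right_comm]
  | add s t hs ht =>
    obtain ⟨M, hM⟩ := hs
    obtain ⟨N, hN⟩ := ht
    refine ⟨max M N, fun x => ?_⟩
    rw [map_add, LinearMap.add_apply]
    exact v.map_add_le ((hM x).trans (mul_le_mul_left (le_max_left M N) _))
      ((hN x).trans (mul_le_mul_left (le_max_right M N) _))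

lemma mem_of_forall_exists_map_sub_lt [Algebra.IsCentral K B] {W : Submodule K B} (hW : W.FG)
    {x : B} (hx : ∀ ε ≠ 0, ∃ w ∈ W, v (x - w) < ε) : x ∈ W := by
  classical
  by_contra hxW
  obtain ⟨f, hfx, hfW⟩ := Submodule.exists_le_ker_of_notMem hxW
  obtain ⟨s, rfl⟩ := hW
  obtain ⟨t, ht⟩ := exists_mulLeftRight_eqOn (Algebra.linearMap K B ∘ₗ f) (insert x s)
  have htW : Submodule.span K (s : Set B) ≤ LinearMap.ker (AlgHom.mulLeftRight K B t) := by
    refine Submodule.span_le.2 fun w hw => ?_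
    have hfw : f w = 0 := hfW (Submodule.subset_span hw)
    simp [ht w (Finset.mem_insert_of_mem hw), hfw]
  have htx : AlgHom.mulLeftRight K B t x ≠ 0 := by
    simpa [ht x (Finset.mem_insert_self x s)] using hfx
  obtain ⟨M, hM⟩ := exists_forall_map_mulLeftRight_le (v := v) t
  have hvtx : v (AlgHom.mulLeftRight K B t x) ≠ 0 := v.ne_zero_iff.2 htx
  have hM0 : M ≠ 0 := fun h0 => hvtx (by simpa [h0] using hM x)
  obtain ⟨w, hw, hlt⟩ := hx _ (div_ne_zero hvtx hM0)
  have hsub := hM (x - w)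
  rw [map_sub, LinearMap.mem_ker.1 (htW hw), sub_zero] at hsub
  rw [lt_div_iff₀' (zero_lt_iff.2 hM0)] at hlt
  exact hlt.not_ge hsub

lemma exists_pow_map_sub_le {S W : AddSubgroup B} (hWS : W ≤ S) {r : Γ₀}
    (happrox : ∀ x ∈ S, ∃ w ∈ W, v (x - w) ≤ r * v x) {x : B} (hx : x ∈ S) (n : ℕ) :
    ∃ w ∈ W, v (x - w) ≤ r ^ n * v x := by
  induction n with
  | zero => exact ⟨0, zero_mem _, by simp⟩
  | succ n ih =>
    obtain ⟨w, hw, hle⟩ := ih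
    obtain ⟨w', hw', hle'⟩ := happrox _ (sub_mem hx (hWS hw))
    refine ⟨w + w', add_mem hw hw', ?_⟩
    rw [← sub_sub, pow_succ', mul_assoc]
    exact hle'.trans (mul_le_mul_right hle _)

lemma le_of_forall_exists_map_sub_le [MulArchimedean Γ₀] [Algebra.IsCentral K B]
    {S W : Submodule K B} (hW : W.FG) (hWS : W ≤ S) {r : Γ₀} (hr : r < 1)
    (happrox : ∀ x ∈ S, ∃ w ∈ W, v (x - w) ≤ r * v x) : S ≤ W := by
  refine fun x hx => mem_of_forall_exists_map_sub_lt (v := v) hW fun ε hε => ?_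
  obtain rfl | hx0 := eq_or_ne x 0
  · exact ⟨0, zero_mem _, by simpa [zero_lt_iff] using hε⟩
  have hvx : v x ≠ 0 := v.ne_zero_iff.2 hx0
  obtain ⟨n, hn⟩ := exists_pow_lt₀ hr (Units.mk0 _ (div_ne_zero hε hvx))
  obtain ⟨w, hw, hle⟩ := exists_pow_map_sub_le (S := S.toAddSubgroup) (W := W.toAddSubgroup)
    hWS happrox hx n
  exact ⟨w, hw, hle.trans_lt ((lt_div_iff₀ (zero_lt_iff.2 hvx)).1 hn)⟩

end Span

section ResidueDegree

variable [Finite (ResidueField v)]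

/-- The residue degree `f(S/K)`; the residue field of `K` is that of `⊥ : Subalgebra K B`. -/
noncomputable def residueDegree (S : Subalgebra K B) : ℕ :=
  finrank (residueSubfield v (⊥ : Subalgebra K B))
    (Subfield.extendScalars (residueSubfield_mono (v := v) (bot_le : ⊥ ≤ S)))

lemma natCard_residueSubfield (S : Subalgebra K B) :
    Nat.card (residueSubfield v S) =
      Nat.card (residueSubfield v (⊥ : Subalgebra K B)) ^ residueDegree v S :=
  Module.natCard_eq_pow_finrank (K := residueSubfield v (⊥ : Subalgebra K B))
    (V := Subfield.extendScalars (residueSubfield_mono (v := v) (bot_le : ⊥ ≤ S)))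

variable {v}

lemma residueDegree_pos (S : Subalgebra K B) : 0 < residueDegree v S :=
  finrank_pos

lemma exists_residue_basis (S : Subalgebra K B) :
    ∃ b : Fin (residueDegree v S) → v.integer, (∀ i, (b i : B) ∈ S) ∧
      LinearIndependent (residueSubfield v (⊥ : Subalgebra K B)) (residue v ∘ b) ∧
      ∀ x : v.integer, (x : B) ∈ S →
        residue v x ∈ Submodule.span (residueSubfield v (⊥ : Subalgebra K B))
          (Set.range (residue v ∘ b)) := by
  let E := Subfield.extendScalars (residueSubfield_mono (v := v) (bot_le : ⊥ ≤ S))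
  let β : Basis (Fin (residueDegree v S)) (residueSubfield v (⊥ : Subalgebra K B)) E :=
    finBasis (residueSubfield v (⊥ : Subalgebra K B)) E
  choose b hbS hb using fun i => mem_residueSubfield_iff.1 (β i).2
  have hβ : residue v ∘ b = E.val ∘ β := funext hb
  refine ⟨b, hbS, ?_, fun x hx => ?_⟩
  · rw [hβ]
    exact β.linearIndependent.map' E.val.toLinearMap (LinearMap.ker_eq_bot.2 Subtype.val_injective)
  · rw [hβ, Set.range_comp]
    have hx' : (⟨residue v x, mem_residueSubfield_iff.2 ⟨x, hx, rfl⟩⟩ : E) ∈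
        Submodule.span (residueSubfield v (⊥ : Subalgebra K B)) (Set.range β) := β.mem_span _
    exact Submodule.apply_mem_span_image_of_mem_span E.val.toLinearMap hx'

variable {ι : Type*} [Fintype ι]

lemma map_sum_smul_eq_one {b : ι → v.integer}
    (hb : LinearIndependent (residueSubfield v (⊥ : Subalgebra K B)) (residue v ∘ b))
    {c : ι → K} (hc : ∀ j, v (algebraMap K B (c j)) ≤ 1) {i : ι} (hi : c i = 1) :
    v (∑ j, c j • (b j : B)) = 1 := by
  let a (j : ι) : v.integer := ⟨algebraMap K B (c j), hc j⟩
  have hsum : ((∑ j, a j * b j : v.integer) : B) = ∑ j, c j • (b j : B) := by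
    simp [a, Algebra.smul_def]
  rw [← hsum, ← residue_ne_zero_iff]
  intro h0
  have hai : residue v (a i) = 0 := congrArg Subtype.val (Fintype.linearIndependent_iff.1 hb
    (fun j => ⟨residue v (a j), a j, Subalgebra.algebraMap_mem (⊥ : Subalgebra K B) (c j), rfl⟩)
    (by simpa [Subfield.smul_def] using h0) i)
  have : a i = 1 := Subtype.ext (by simp [a, hi])
  simp [this] at hai

lemma exists_map_sum_smul_eq [Nonempty ι] {b : ι → v.integer}
    (hb : LinearIndependent (residueSubfield v (⊥ : Subalgebra K B)) (residue v ∘ b))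
    (c : ι → K) :
    ∃ i, v (∑ j, c j • (b j : B)) = v (algebraMap K B (c i)) ∧
      ∀ j, v (algebraMap K B (c j)) ≤ v (algebraMap K B (c i)) := by
  obtain ⟨i, hi⟩ := Finite.exists_max fun j => v (algebraMap K B (c j))
  refine ⟨i, ?_, hi⟩
  obtain h0 | h0 := eq_or_ne (c i) 0
  · have hc (j : ι) : c j = 0 := by simpa [h0] using hi j
    simp [hc]
  have hvi : v (algebraMap K B (c i)) ≠ 0 := by simpa using h0
  have h1 := map_sum_smul_eq_one (v := v) hb (c := fun j => (c i)⁻¹ * c j) (i := i)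
    (fun j => by
      rw [map_mul, map_mul, map_inv₀, map_inv₀, inv_mul_le_one₀ (zero_lt_iff.2 hvi)]
      exact hi j)
    (inv_mul_cancel₀ h0)
  simp only [mul_smul, ← Finset.smul_sum] at h1
  rw [Algebra.smul_def, map_mul, map_inv₀, map_inv₀, inv_mul_eq_one₀ hvi] at h1
  exact h1.symm

lemma exists_map_sub_sum_smul_lt_one {b : ι → v.integer} {x : v.integer}
    (hx : residue v x ∈ Submodule.span (residueSubfield v (⊥ : Subalgebra K B))
      (Set.range (residue v ∘ b))) :
    ∃ c : ι → K, v (x - ∑ j, c j • (b j : B)) < 1 := by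
  obtain ⟨c', hc'⟩ := Submodule.mem_span_range_iff_exists_fun _ |>.1 hx
  choose a ha hac using fun j => mem_residueSubfield_iff.1 (c' j).2
  choose c hc using fun j => Algebra.mem_bot.1 (ha j)
  refine ⟨c, ?_⟩
  have hsum : ((∑ j, a j * b j : v.integer) : B) = ∑ j, c j • (b j : B) := by
    simp [hc, Algebra.smul_def]
  rw [← hsum, ← residue_eq_iff, ← hc']
  simp [hac, Subfield.smul_def]

end ResidueDegree

section Fundamental

lemma eq_zero_of_sum_eq_zero_of_map_injOn {v : Valuation B Γ₀} {ι : Type*} [Fintype ι] {y : ι → B}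
    (hy : ∀ i j, y i ≠ 0 → v (y i) = v (y j) → i = j) (h : ∑ i, y i = 0) (i : ι) : y i = 0 := by
  classical
  have : Nonempty ι := ⟨i⟩
  obtain ⟨k, hk⟩ := Finite.exists_max fun j => v (y j)
  have hk0 : y k = 0 := by
    by_contra hne
    have hlt (j : ι) (hj : j ∈ Finset.univ \ {k}) : v (y j) < v (y k) := by
      refine (hk j).lt_of_ne fun heq => ?_
      simp [hy k j hne heq.symm] at hj
    have hsum := v.map_sum_eq_of_lt (Finset.mem_univ k) hlt
    rw [h, map_zero] at hsum
    exact hne (v.zero_iff.1 hsum.symm)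
  simpa [hk0] using hk i

lemma zpow_mul_add_inj {a : Γ₀} {e : ℕ} (ha : a ≠ 0) (ha1 : a < 1) {m n : ℤ} {i j : Fin e}
    (h : a ^ (e * m + i : ℤ) = a ^ (e * n + j : ℤ)) : i = j := by
  have hmn := (zpow_right_strictAnti₀ (zero_lt_iff.2 ha) ha1).injective h
  have hmod := congrArg (· % (e : ℤ)) hmn
  have hi := Int.emod_eq_of_lt (Int.natCast_nonneg i) (Int.ofNat_lt.2 i.2)
  have hj := Int.emod_eq_of_lt (Int.natCast_nonneg j) (Int.ofNat_lt.2 j.2)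
  simp only [Int.mul_add_emod_self_left] at hmod
  rw [hi, hj] at hmod
  exact Fin.ext (Int.ofNat_inj.1 hmod)

variable {v} [MulArchimedean Γ₀] {S : Subalgebra K B} {ϖ : K} {π : B} {e : ℕ}

lemma IsUniformizer.exists_map_eq_mul_pow (hπ : IsUniformizer v S π) (hS : ∀ x ∈ S, x⁻¹ ∈ S)
    (hϖ0 : ϖ ≠ 0) (he0 : e ≠ 0) (he : v (algebraMap K B ϖ) = v π ^ e) {x : B} (hx : x ∈ S)
    (hx0 : x ≠ 0) : ∃ k : K, k ≠ 0 ∧ ∃ j : Fin e, v x = v (algebraMap K B k) * v π ^ (j : ℕ) := by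
  obtain ⟨n, hn⟩ := hπ.exists_zpow hS hx hx0
  have hmod : 0 ≤ n % e := Int.emod_nonneg n (by exact_mod_cast he0)
  have hlt : n % e < e := Int.emod_lt_of_pos n (by lia)
  refine ⟨ϖ ^ (n / e), zpow_ne_zero _ hϖ0, ⟨(n % e).toNat, by lia⟩, ?_⟩
  rw [hn, map_zpow₀, map_zpow₀, he, ← zpow_natCast, ← zpow_natCast, Int.toNat_of_nonneg hmod,
    ← zpow_mul, ← zpow_add₀ (v.ne_zero_iff.2 hπ.ne_zero), Int.mul_ediv_add_emod]

variable [Finite (ResidueField v)]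

lemma linearIndependent_mul_pow (hϖ : IsUniformizer v (⊥ : Subalgebra K B) (algebraMap K B ϖ))
    (hπ0 : π ≠ 0) (hπ1 : v π < 1) (he : v (algebraMap K B ϖ) = v π ^ e)
    {ι : Type*} [Finite ι] {b : ι → v.integer}
    (hb : LinearIndependent (residueSubfield v (⊥ : Subalgebra K B)) (residue v ∘ b)) :
    LinearIndependent K fun p : ι × Fin e => (b p.1 : B) * π ^ (p.2 : ℕ) := by
  have := Fintype.ofFinite ι
  have hvπ : v π ≠ 0 := v.ne_zero_iff.2 hπ0
  rw [Fintype.linearIndependent_iff]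
  rintro g hg ⟨i, j⟩
  have : Nonempty ι := ⟨i⟩
  let y (j : Fin e) : B := (∑ i, g (i, j) • (b i : B)) * π ^ (j : ℕ)
  have hval (j : Fin e) (hj : y j ≠ 0) : ∃ m : ℤ, v (y j) = v π ^ (e * m + j : ℤ) := by
    obtain ⟨k, hk, -⟩ := exists_map_sum_smul_eq hb fun i => g (i, j)
    have hk0 : algebraMap K B (g (k, j)) ≠ 0 := by
      rw [← v.ne_zero_iff, ← hk, v.ne_zero_iff]
      exact left_ne_zero_of_mul hj
    obtain ⟨m, hm⟩ := hϖ.exists_zpow (fun _ => inv_mem_bot) (Subalgebra.algebraMap_mem _ _) hk0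
    refine ⟨m, ?_⟩
    rw [map_mul, hk, hm, he, map_pow, zpow_add₀ hvπ, zpow_mul, zpow_natCast, zpow_natCast]
  have hy : ∑ j, y j = 0 := by
    simpa only [y, Fintype.sum_prod_type_right, Finset.sum_mul, smul_mul_assoc] using hg
  have hyj : y j = 0 := by
    refine eq_zero_of_sum_eq_zero_of_map_injOn (v := v) (fun i j hi hij => ?_) hy j
    have hj : y j ≠ 0 := by rwa [← v.ne_zero_iff, ← hij, v.ne_zero_iff]
    obtain ⟨m, hm⟩ := hval i hi
    obtain ⟨n, hn⟩ := hval j hj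
    exact zpow_mul_add_inj hvπ hπ1 (by rw [← hm, ← hn, hij])
  obtain ⟨k, hk, hle⟩ := exists_map_sum_smul_eq hb fun i => g (i, j)
  rw [(mul_eq_zero_iff_right (pow_ne_zero _ hπ0)).1 hyj, map_zero] at hk
  simpa [← hk] using hle i

lemma exists_mem_span_map_sub_le (hS : ∀ x ∈ S, x⁻¹ ∈ S) (hϖ0 : ϖ ≠ 0) (hπ : IsUniformizer v S π)
    (he0 : e ≠ 0) (he : v (algebraMap K B ϖ) = v π ^ e)
    {ι : Type*} [Finite ι] {b : ι → v.integer} (hbS : ∀ i, (b i : B) ∈ S)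
    (hb : ∀ x : v.integer, (x : B) ∈ S →
      residue v x ∈ Submodule.span (residueSubfield v (⊥ : Subalgebra K B))
        (Set.range (residue v ∘ b)))
    {x : B} (hx : x ∈ S) :
    ∃ w ∈ Submodule.span K (Set.range fun p : ι × Fin e => (b p.1 : B) * π ^ (p.2 : ℕ)),
      v (x - w) ≤ v π * v x := by
  have := Fintype.ofFinite ι
  obtain rfl | hx0 := eq_or_ne x 0
  · exact ⟨0, zero_mem _, by simp⟩
  obtain ⟨k, hk0, j, hkj⟩ := hπ.exists_map_eq_mul_pow hS hϖ0 he0 he hx hx0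
  have hπj : π ^ (j : ℕ) ≠ 0 := pow_ne_zero _ hπ.ne_zero
  let u := k⁻¹ • (x * (π ^ (j : ℕ))⁻¹)
  have huS : u ∈ S := S.smul_mem (mul_mem hx (hS _ (pow_mem hπ.mem _))) _
  have hx_eq : x = k • (u * π ^ (j : ℕ)) := by
    simp only [u, smul_mul_assoc, inv_mul_cancel_right₀ hπj, smul_inv_smul₀ hk0]
  have hvu : v u = 1 := by
    simp only [u, Algebra.smul_def, map_mul, map_inv₀, map_pow, hkj]
    rw [mul_inv_cancel_right₀ (pow_ne_zero _ (v.ne_zero_iff.2 hπ.ne_zero)),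
      inv_mul_cancel₀ (by simpa using hk0)]
  obtain ⟨c, hc⟩ := exists_map_sub_sum_smul_lt_one (hb ⟨u, hvu.le⟩ huS)
  have hcS : u - ∑ i, c i • (b i : B) ∈ S :=
    sub_mem huS (sum_mem fun i _ => S.smul_mem (hbS i) _)
  refine ⟨k • ((∑ i, c i • (b i : B)) * π ^ (j : ℕ)), Submodule.smul_mem _ _ ?_, ?_⟩
  · rw [Finset.sum_mul]
    refine Submodule.sum_mem _ fun i _ => ?_
    rw [smul_mul_assoc]
    exact Submodule.smul_mem _ _ (Submodule.subset_span ⟨(i, j), rfl⟩)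
  · rw [hkj]
    nth_rw 1 [hx_eq]
    rw [← smul_sub, ← sub_mul, Algebra.smul_def, map_mul, map_mul, map_pow, mul_left_comm]
    exact mul_le_mul_left (hπ.le_of_lt_one _ hcS hc) _

theorem finiteDimensional_and_finrank_eq [Algebra.IsCentral K B]
    (hϖ : IsUniformizer v (⊥ : Subalgebra K B) (algebraMap K B ϖ))
    (hπ : IsUniformizer v S π) (hS : ∀ x ∈ S, x⁻¹ ∈ S) (he : v (algebraMap K B ϖ) = v π ^ e) :
    FiniteDimensional K S ∧ finrank K S = e * residueDegree v S := by
  have hϖ0 : ϖ ≠ 0 := fun h => hϖ.ne_zero (by rw [h, map_zero])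
  have he0 : e ≠ 0 := fun h => hϖ.lt_one.ne (by rw [he, h, pow_zero])
  obtain ⟨b, hbS, hbi, hbs⟩ := exists_residue_basis (v := v) S
  have hli := linearIndependent_mul_pow hϖ hπ.ne_zero hπ.lt_one he hbi
  let W := Submodule.span K (Set.range fun p : Fin (residueDegree v S) × Fin e =>
    (b p.1 : B) * π ^ (p.2 : ℕ))
  have hWfg : W.FG := Submodule.fg_span (Set.finite_range _)
  have hWS : W ≤ Subalgebra.toSubmodule S := by
    refine Submodule.span_le.2 ?_
    rintro _ ⟨p, rfl⟩
    exact S.mul_mem (hbS _) (pow_mem hπ.mem _)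
  have hSW : Subalgebra.toSubmodule S = W := (le_of_forall_exists_map_sub_le hWfg hWS hπ.lt_one
    fun x hx => exists_mem_span_map_sub_le hS hϖ0 hπ he0 he hbS hbs hx).antisymm hWS
  refine ⟨Module.Finite.iff_fg.2 (hSW ▸ hWfg : (Subalgebra.toSubmodule S).FG), ?_⟩
  calc finrank K S = finrank K W := congrArg (fun V : Submodule K B => finrank K V) hSW
    _ = e * residueDegree v S := by
      rw [finrank_span_eq_card hli, Fintype.card_prod, Fintype.card_fin, Fintype.card_fin, mul_comm]

end Fundamental

section Conjugation

/-- Conjugation by a unit of `B`, on the ring of integers. -/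
def integerConj (x : Bˣ) : v.integer →+* v.integer where
  toFun y := ⟨x * y * ↑x⁻¹, by
    rw [Valuation.mem_integer_iff, map_mul, map_mul, mul_right_comm, ← map_mul, x.mul_inv, map_one,
      one_mul]
    exact y.2⟩
  map_one' := Subtype.ext (by simp)
  map_mul' y z := Subtype.ext (by simp [mul_assoc])
  map_zero' := Subtype.ext (by simp)
  map_add' y z := Subtype.ext (by simp [mul_add, add_mul])

lemma map_integerConj (x : Bˣ) (y : v.integer) : v (integerConj v x y : B) = v (y : B) := by
  change v (x * y * ↑x⁻¹) = v (y : B)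
  rw [map_mul, map_mul, mul_right_comm, ← map_mul, x.mul_inv, map_one, one_mul]

/-- Conjugation by a unit of `B`, on the residue field. -/
noncomputable def residueConjHom (x : Bˣ) : ResidueField v →+* ResidueField v :=
  Ideal.Quotient.lift (v.ltIdeal 1) ((residue v).comp (integerConj v x)) fun y hy =>
    residue_eq_zero_iff.2 ((map_integerConj v x y).trans_lt hy)

lemma residueConjHom_one : residueConjHom v 1 = RingHom.id _ :=
  Ideal.Quotient.ringHom_ext (RingHom.ext fun y =>
    congrArg (residue v) (Subtype.ext (by simp [integerConj])))

lemma residueConjHom_mul (x y : Bˣ) :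
    residueConjHom v (x * y) = (residueConjHom v x).comp (residueConjHom v y) :=
  Ideal.Quotient.ringHom_ext (RingHom.ext fun z =>
    congrArg (residue v) (Subtype.ext (by simp [integerConj, mul_assoc])))

/-- The action of `Bˣ` on the residue field by conjugation. -/
noncomputable def residueConj : Bˣ →* RingAut (ResidueField v) where
  toFun x := RingEquiv.ofRingHom (residueConjHom v x) (residueConjHom v x⁻¹)
    (by rw [← residueConjHom_mul, mul_inv_cancel, residueConjHom_one])
    (by rw [← residueConjHom_mul, inv_mul_cancel, residueConjHom_one])
  map_one' := RingEquiv.ext fun a => RingHom.congr_fun (residueConjHom_one v) a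
  map_mul' x y := RingEquiv.ext fun a => RingHom.congr_fun (residueConjHom_mul v x y) a

variable {v}

lemma residueConj_residue_eq_iff {x : Bˣ} {y z : v.integer} :
    residueConj v x (residue v y) = residue v z ↔ v (x * y - z * x : B) < v (x : B) := by
  have hx : 0 < v (x : B) := zero_lt_iff.2 (v.ne_zero_iff.2 x.ne_zero)
  have hxy : (x * y - z * x : B) = (integerConj v x y - z) * x := by
    simp [integerConj, sub_mul]
  rw [hxy, map_mul, mul_lt_iff_lt_one_left hx]
  exact residue_eq_iff (x := integerConj v x y)

variable [Finite (ResidueField v)]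

lemma residueConj_eq_one {x : Bˣ} (hx : v (x : B) = 1) : residueConj v x = 1 := by
  refine RingEquiv.ext fun a => ?_
  obtain ⟨y, rfl⟩ := Ideal.Quotient.mk_surjective a
  refine residueConj_residue_eq_iff.2 ?_
  let u : v.integer := ⟨x, hx.le⟩
  rw [hx]
  exact residue_eq_iff (x := u * y) (y := y * u) |>.1 (by rw [map_mul, map_mul, mul_comm])

lemma residueConj_eq_zpow {x y : Bˣ} {n : ℤ} (h : v (x : B) = v (y : B) ^ n) :
    residueConj v x = residueConj v y ^ n := by
  have hy : v (y : B) ≠ 0 := v.ne_zero_iff.2 y.ne_zero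
  rw [← map_zpow, ← mul_inv_eq_one, ← map_inv, ← map_mul]
  apply residueConj_eq_one
  rw [← zpow_neg, Units.val_mul, map_mul, h, Units.val_zpow_eq_zpow_val, map_zpow₀,
    ← zpow_add₀ hy, add_neg_cancel, zpow_zero]

lemma residueConj_apply_of_mem_residueSubfield {S : Subalgebra K B} {x : Bˣ}
    (hx : (x : B) ∈ Subalgebra.centralizer K (S : Set B)) {a : ResidueField v}
    (ha : a ∈ residueSubfield v S) : residueConj v x a = a := by
  obtain ⟨y, hy, rfl⟩ := ha
  refine residueConj_residue_eq_iff.2 ?_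
  rw [hx y hy, sub_self, map_zero]
  exact zero_lt_iff.2 (v.ne_zero_iff.2 x.ne_zero)

end Conjugation

section NearlyCentral

/-- `b` commutes with every element of `B` up to a relative error `ε`. -/
def IsCentralUpTo (ε : Γ₀) (b : B) : Prop := ∀ x, v (x * b - b * x) ≤ ε * v x

variable {v} {ε r : Γ₀} {b : B}

lemma IsCentralUpTo.pow (hb : IsCentralUpTo v ε b) (hb1 : v b ≤ 1) (m : ℕ) :
    IsCentralUpTo v ε (b ^ m) := by
  intro x
  induction m with
  | zero => simp
  | succ m ih =>
    have hsplit : x * b ^ (m + 1) - b ^ (m + 1) * x =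
        (x * b ^ m - b ^ m * x) * b + b ^ m * (x * b - b * x) := by
      simp only [pow_succ]; noncomm_ring
    rw [hsplit]
    refine v.map_add_le ?_ ?_
    · rw [map_mul]
      exact mul_le_of_le_of_le_one ih hb1
    · rw [map_mul, map_pow]
      exact mul_le_of_le_one_of_le (pow_le_one₀ zero_le hb1) (hb x)

/-- `[x, ·]` is a derivation, and `b` nearly commutes with `[x, b]`. -/
lemma IsCentralUpTo.map_commutator_pow_sub_le (hb : IsCentralUpTo v ε b) (hb1 : v b ≤ 1) (x : B)
    (m : ℕ) :
    v (x * b ^ (m + 1) - b ^ (m + 1) * x - (m + 1) • (b ^ m * (x * b - b * x))) ≤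
      ε * (ε * v x) := by
  induction m with
  | zero => simp
  | succ m ih =>
    have hsplit : x * b ^ (m + 1 + 1) - b ^ (m + 1 + 1) * x -
          (m + 1 + 1) • (b ^ (m + 1) * (x * b - b * x)) =
        b * (x * b ^ (m + 1) - b ^ (m + 1) * x - (m + 1) • (b ^ m * (x * b - b * x))) +
          ((x * b - b * x) * b ^ (m + 1) - b ^ (m + 1) * (x * b - b * x)) := by
      simp only [pow_succ', mul_sub, sub_mul, mul_add, mul_smul_comm, smul_sub, add_smul, one_smul,
        mul_assoc]
      abel
    rw [hsplit]
    refine v.map_add_le ?_ ?_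
    · rw [map_mul]
      exact mul_le_of_le_one_of_le hb1 ih
    · exact (hb.pow hb1 _ _).trans (mul_le_mul_right (hb x) _)

lemma IsCentralUpTo.pow_of_map_natCast_le (hb : IsCentralUpTo v ε b) (hb1 : v b ≤ 1) (hε : ε ≤ r)
    {m : ℕ} (hm : m ≠ 0) (hmr : v (m : B) ≤ r) : IsCentralUpTo v (r * ε) (b ^ m) := by
  intro x
  obtain ⟨m, rfl⟩ := Nat.exists_eq_succ_of_ne_zero hm
  rw [← sub_add_cancel (x * _ - _) ((m + 1) • (b ^ m * (x * b - b * x))), mul_assoc]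
  refine v.map_add_le ((hb.map_commutator_pow_sub_le hb1 x m).trans (mul_le_mul_left hε _)) ?_
  rw [nsmul_eq_mul, map_mul, map_mul, map_pow]
  exact mul_le_mul' hmr (mul_le_of_le_one_of_le (pow_le_one₀ zero_le hb1) (hb x))

lemma IsCentralUpTo.pow_pow (hb : IsCentralUpTo v r b) (hb1 : v b ≤ 1) (hr1 : r ≤ 1)
    {m : ℕ} (hm : m ≠ 0) (hmr : v (m : B) ≤ r) (s : ℕ) :
    IsCentralUpTo v (r ^ (s + 1)) (b ^ m ^ s) := by
  induction s with
  | zero => simpa using hb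
  | succ s ih =>
    rw [pow_succ m, pow_mul, pow_succ' r]
    refine ih.pow_of_map_natCast_le ?_ (pow_le_of_le_one zero_le hr1 s.succ_ne_zero) hm hmr
    rw [map_pow]
    exact pow_le_one₀ zero_le hb1

lemma exists_map_mulLeftRight_sub_le (t : B ⊗[K] Bᵐᵒᵖ) :
    ∃ M : Γ₀, ∀ ε z, IsCentralUpTo v ε z →
      v (AlgHom.mulLeftRight K B t z - z * AlgHom.mulLeftRight K B t 1) ≤ M * ε := by
  induction t with
  | zero => exact ⟨0, fun ε z _ => by simp⟩
  | tmul a c =>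
    refine ⟨v a * v c.unop, fun ε z hz => ?_⟩
    rw [AlgHom.mulLeftRight_apply, AlgHom.mulLeftRight_apply, mul_one, ← mul_assoc, ← sub_mul,
      map_mul, mul_right_comm, mul_comm (v a)]
    exact mul_le_mul_left (hz a) _
  | add s t hs ht =>
    obtain ⟨M, hM⟩ := hs
    obtain ⟨N, hN⟩ := ht
    refine ⟨max M N, fun ε z hz => ?_⟩
    rw [map_add, LinearMap.add_apply, LinearMap.add_apply, mul_add, add_sub_add_comm]
    exact v.map_add_le ((hM ε z hz).trans (mul_le_mul_left (le_max_left M N) _))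
      ((hN ε z hz).trans (mul_le_mul_left (le_max_right M N) _))

/-- Nearly central elements are close to the center: project them to `K` by an operator of
`B ⊗ Bᵐᵒᵖ`, which they almost commute with. -/
lemma exists_map_algebraMap_sub_le [Algebra.IsCentral K B] [FiniteDimensional K B] :
    ∃ M : Γ₀, ∀ ε z, IsCentralUpTo v ε z → ∃ c : K, v (algebraMap K B c - z) ≤ M * ε := by
  obtain ⟨p, hp⟩ := Module.Projective.exists_dual_eq_one K (one_ne_zero : (1 : B) ≠ 0)
  obtain ⟨t, ht⟩ := mulLeftRight_surjective (Algebra.linearMap K B ∘ₗ p)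
  obtain ⟨M, hM⟩ := exists_map_mulLeftRight_sub_le (v := v) t
  refine ⟨M, fun ε z hz => ⟨p z, ?_⟩⟩
  simpa [ht, hp] using hM ε z hz

end NearlyCentral

section FixedField

variable {k : Type*} [Field k] (σ : RingAut k)

lemma mem_fixedPoints_zpowers_iff {a : k} :
    a ∈ FixedPoints.subfield (Subgroup.zpowers σ) k ↔ σ a = a :=
  ⟨fun h => h ⟨σ, Subgroup.mem_zpowers σ⟩, fun h τ =>
    (Subgroup.zpowers_le.2 (show σ ∈ MulAction.stabilizer (RingAut k) a from h)) τ.2⟩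

variable [Finite k]

instance : Finite (RingAut k) := DFunLike.finite (k ≃+* k)

lemma natCard_fixedPoints_pow_orderOf :
    Nat.card (FixedPoints.subfield (Subgroup.zpowers σ) k) ^ orderOf σ = Nat.card k := by
  have := Fintype.ofFinite (Subgroup.zpowers σ)
  rw [Module.natCard_eq_pow_finrank (K := FixedPoints.subfield (Subgroup.zpowers σ) k) (V := k),
    FixedPoints.finrank_eq_card, ← Nat.card_eq_fintype_card, Nat.card_zpowers]

lemma natCard_fixedPoints_pow_le {d : ℕ} (hd : d ≠ 0) :
    Nat.card (FixedPoints.subfield (Subgroup.zpowers (σ ^ d)) k) ≤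
      Nat.card (FixedPoints.subfield (Subgroup.zpowers σ) k) ^ d := by
  have hord : orderOf σ ≤ d * orderOf (σ ^ d) :=
    orderOf_le_of_pow_eq_one (Nat.mul_pos (Nat.pos_of_ne_zero hd) (orderOf_pos _))
      (by rw [pow_mul, pow_orderOf_eq_one])
  refine (Nat.pow_le_pow_iff_left (orderOf_pos (σ ^ d)).ne').1 ?_
  rw [natCard_fixedPoints_pow_orderOf, ← pow_mul, ← natCard_fixedPoints_pow_orderOf σ]
  exact Nat.pow_le_pow_right Nat.card_pos hord

end FixedField

section ResidueCenter

variable {v} [Finite (ResidueField v)] {π : Bˣ}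

lemma IsUniformizer.map_natCard_residueField_le
    (hπ : IsUniformizer v (⊤ : Subalgebra K B) (π : B)) :
    v (Nat.card (ResidueField v) : B) ≤ v (π : B) := by
  refine hπ.le_of_lt_one _ trivial ?_
  have h0 : residue v (Nat.card (ResidueField v) : v.integer) = 0 := by
    rw [map_natCast, ← nsmul_one, card_nsmul_eq_zero']
  simpa using residue_eq_zero_iff.1 h0

variable [MulArchimedean Γ₀]

lemma IsUniformizer.isCentralUpTo (hπ : IsUniformizer v (⊤ : Subalgebra K B) (π : B))
    {b : v.integer} (hb : residueConj v π (residue v b) = residue v b) :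
    IsCentralUpTo v (v (π : B)) (b : B) := by
  intro x
  obtain rfl | hx0 := eq_or_ne x 0
  · simp
  obtain ⟨n, hn⟩ := hπ.exists_zpow (fun _ _ => trivial) (x := x) trivial hx0
  have hx : residueConj v (Units.mk0 x hx0) (residue v b) = residue v b := by
    rw [residueConj_eq_zpow (y := π) hn]
    exact zpow_mem (K := MulAction.stabilizer (RingAut (ResidueField v)) (residue v b)) hb n
  have hvx : 0 < v x := zero_lt_iff.2 (v.ne_zero_iff.2 hx0)
  have hle := hπ.le_of_lt_one ((x * b - b * x) * x⁻¹) trivial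
  rw [map_mul, map_inv₀, ← div_eq_mul_inv, div_lt_one₀ hvx, div_le_iff₀ hvx] at hle
  exact hle (residueConj_residue_eq_iff.1 hx)

/-- Repeatedly raising a lift of `a` to the power `|k|`, where `k` is the residue field, does not
change its residue class, but brings it arbitrarily close to `K`. -/
lemma IsUniformizer.mem_residueSubfield_bot [Algebra.IsCentral K B] [FiniteDimensional K B]
    (hπ : IsUniformizer v (⊤ : Subalgebra K B) (π : B)) {a : ResidueField v}
    (ha : residueConj v π a = a) : a ∈ residueSubfield v (⊥ : Subalgebra K B) := by
  obtain ⟨b, rfl⟩ := Ideal.Quotient.mk_surjective a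
  obtain ⟨M, hM⟩ := exists_map_algebraMap_sub_le (K := K) (v := v)
  have hM1 : 0 < max M 1 := lt_max_of_lt_right one_pos
  obtain ⟨s, hs⟩ := exists_pow_lt₀ hπ.lt_one (Units.mk0 _ (inv_ne_zero hM1.ne'))
  let N := Nat.card (ResidueField v) ^ s
  obtain ⟨c, hc⟩ := hM _ _ ((hπ.isCentralUpTo ha).pow_pow b.2 hπ.lt_one.le Nat.card_pos.ne'
    hπ.map_natCard_residueField_le s)
  have hcN : v (algebraMap K B c - (b ^ N : v.integer)) < 1 := calc
    _ ≤ M * v (π : B) ^ (s + 1) := hc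
    _ ≤ max M 1 * v (π : B) ^ s :=
      mul_le_mul' (le_max_left M 1) (pow_le_pow_right_of_le_one' hπ.lt_one.le s.le_succ)
    _ < 1 := (lt_inv_mul_iff₀ hM1).1 (by simpa using hs)
  have hc1 : v (algebraMap K B c) ≤ 1 := by
    rw [← sub_add_cancel (algebraMap K B c) (b ^ N : v.integer)]
    exact v.map_add_le hcN.le (b ^ N).2
  refine ⟨⟨_, hc1⟩, Subalgebra.algebraMap_mem (⊥ : Subalgebra K B) c, ?_⟩
  have := Fintype.ofFinite (ResidueField v)
  refine (residue_eq_iff.2 hcN).trans ?_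
  simp only [N, map_pow, Nat.card_eq_fintype_card, FiniteField.pow_card_pow]

lemma IsUniformizer.residueDegree_le [Algebra.IsCentral K B] [FiniteDimensional K B] {π : B}
    (hπ : IsUniformizer v (⊤ : Subalgebra K B) π) {S : Subalgebra K B} {x : B}
    (hx : x ∈ Subalgebra.centralizer K (S : Set B)) {d : ℕ} (hd : d ≠ 0)
    (hxd : v x = v π ^ d) : residueDegree v S ≤ d := by
  have hx0 : x ≠ 0 := by
    rw [← v.ne_zero_iff, hxd]
    exact pow_ne_zero _ (v.ne_zero_iff.2 hπ.ne_zero)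
  let σ := residueConj v (Units.mk0 π hπ.ne_zero)
  have hσ : residueConj v (Units.mk0 x hx0) = σ ^ d :=
    residueConj_eq_zpow (n := d) (by rw [zpow_natCast]; exact hxd)
  let Fix (τ : RingAut (ResidueField v)) : Subfield (ResidueField v) :=
    FixedPoints.subfield (Subgroup.zpowers τ) (ResidueField v)
  have hSσ : residueSubfield v S ≤ Fix (σ ^ d) := fun a ha =>
    (mem_fixedPoints_zpowers_iff _).2
      (hσ ▸ residueConj_apply_of_mem_residueSubfield (x := Units.mk0 x hx0) hx ha)
  have hσK : Fix σ ≤ residueSubfield v (⊥ : Subalgebra K B) := fun a ha =>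
    IsUniformizer.mem_residueSubfield_bot (π := Units.mk0 π hπ.ne_zero) hπ
      ((mem_fixedPoints_zpowers_iff _).1 ha)
  refine (Nat.pow_le_pow_iff_right
    (Finite.one_lt_card (α := residueSubfield v (⊥ : Subalgebra K B)))).1 ?_
  calc
    _ = Nat.card (residueSubfield v S) := (natCard_residueSubfield v S).symm
    _ ≤ Nat.card (Fix (σ ^ d)) := Nat.card_mono (Set.toFinite _) hSσ
    _ ≤ Nat.card (Fix σ) ^ d := natCard_fixedPoints_pow_le σ hd
    _ ≤ _ := Nat.pow_le_pow_left (Nat.card_mono (Set.toFinite _) hσK) d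

end ResidueCenter

section Swap

variable {v} [MulArchimedean Γ₀] [Finite (ResidueField v)] [Algebra.IsCentral K B]
  {S : Subalgebra K B} {π : B} {ϖ : K} {e : ℕ}

lemma IsUniformizer.finiteDimensional
    (hϖ : IsUniformizer v (⊥ : Subalgebra K B) (algebraMap K B ϖ))
    (hπ : IsUniformizer v (⊤ : Subalgebra K B) π) : FiniteDimensional K B := by
  obtain ⟨e, -, he⟩ := hπ.exists_pow (fun _ _ => trivial) trivial hϖ.ne_zero hϖ.lt_one
  have := (finiteDimensional_and_finrank_eq hϖ hπ (fun _ _ => trivial) he).1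
  exact Module.Finite.equiv (Subalgebra.topEquiv (R := K) (A := B)).toLinearEquiv

lemma IsUniformizer.finrank_eq_mul_residueDegree_top
    (hπ : IsUniformizer v (⊤ : Subalgebra K B) π)
    (hϖ : IsUniformizer v (⊥ : Subalgebra K B) (algebraMap K B ϖ))
    (he : v (algebraMap K B ϖ) = v π ^ e) :
    finrank K B = e * residueDegree v (⊤ : Subalgebra K B) := by
  rw [← (finiteDimensional_and_finrank_eq hϖ hπ (fun _ _ => trivial) he).2]
  exact (Subalgebra.topEquiv (R := K) (A := B)).toLinearEquiv.finrank_eq.symm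

lemma IsUniformizer.finrank_eq_mul_residueDegree [FiniteDimensional K B] (hπ : IsUniformizer v S π)
    (hϖ : IsUniformizer v (⊥ : Subalgebra K B) (algebraMap K B ϖ))
    (he : v (algebraMap K B ϖ) = v π ^ e) : finrank K S = e * residueDegree v S :=
  (finiteDimensional_and_finrank_eq hϖ hπ (fun _ => Algebra.IsIntegral.inv_mem) he).2

/-- Both `K[π]` and its centralizer contain `π`, so `e ^ 2` divides the product of their
dimensions. -/
lemma IsUniformizer.le_residueDegree_top [FiniteDimensional K B]
    (hπ : IsUniformizer v (⊤ : Subalgebra K B) π)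
    (hϖ : IsUniformizer v (⊥ : Subalgebra K B) (algebraMap K B ϖ))
    (he : v (algebraMap K B ϖ) = v π ^ e) : e ≤ residueDegree v (⊤ : Subalgebra K B) := by
  let A := Algebra.adjoin K {π}
  let A' := Subalgebra.centralizer K (A : Set B)
  have hA : π ∈ A := Algebra.self_mem_adjoin_singleton K π
  have hA' : π ∈ A' := fun x hx => (Algebra.commute_of_mem_adjoin_self hx).symm
  have hdim := finrank_mul_finrank_centralizer A
  rw [(hπ.of_le le_top hA).finrank_eq_mul_residueDegree hϖ he,
    (hπ.of_le le_top hA').finrank_eq_mul_residueDegree hϖ he,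
    hπ.finrank_eq_mul_residueDegree_top hϖ he, mul_assoc] at hdim
  have he0 : 0 < e := Nat.pos_of_ne_zero fun h => hϖ.lt_one.ne (by rw [he, h, pow_zero])
  rw [← Nat.eq_of_mul_eq_mul_left he0 hdim, mul_left_comm]
  exact Nat.le_mul_of_pos_right e (Nat.mul_pos (residueDegree_pos A) (residueDegree_pos A'))

theorem residueDegree_top_eq_and_residueDegree_eq {L : Subalgebra K B} {πL πC : B} {eL eC : ℕ}
    (hϖ : IsUniformizer v (⊥ : Subalgebra K B) (algebraMap K B ϖ))
    (hL : IsUniformizer v L πL)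
    (hC : IsUniformizer v (Subalgebra.centralizer K (L : Set B)) πC)
    (hB : IsUniformizer v (⊤ : Subalgebra K B) π)
    (heL : v (algebraMap K B ϖ) = v πL ^ eL) (heC : v πC = v π ^ eC) :
    eL * residueDegree v (Subalgebra.centralizer K (L : Set B)) =
        residueDegree v (⊤ : Subalgebra K B) ∧ residueDegree v L = eC := by
  have := hϖ.finiteDimensional hB
  let C := Subalgebra.centralizer K (L : Set B)
  obtain ⟨a, ha0, ha⟩ := hB.exists_pow (fun _ _ => trivial) trivial hL.ne_zero hL.lt_one
  obtain ⟨c, hc0, hc⟩ := hC.exists_pow (fun _ => Algebra.IsIntegral.inv_mem)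
    (Subalgebra.algebraMap_mem _ ϖ) hϖ.ne_zero hϖ.lt_one
  have heC0 : eC ≠ 0 := fun h => hC.lt_one.ne (by rw [heC, h, pow_zero])
  have heB : v (algebraMap K B ϖ) = v π ^ (eC * c) := by rw [hc, heC, pow_mul]
  have hfL : residueDegree v L ≤ eC :=
    hB.residueDegree_le hC.mem heC0 heC
  have hfC : residueDegree v C ≤ a :=
    hB.residueDegree_le (fun x hx => (hx πL hL.mem).symm) ha0 ha
  have hfB : eL * residueDegree v C ≤ residueDegree v (⊤ : Subalgebra K B) :=
    (Nat.mul_le_mul_left eL hfC).trans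
      (hB.le_residueDegree_top hϖ (by rw [heL, ha, ← pow_mul, mul_comm]))
  have hdim := finrank_mul_finrank_centralizer L
  rw [hL.finrank_eq_mul_residueDegree hϖ heL, hC.finrank_eq_mul_residueDegree hϖ hc,
    hB.finrank_eq_mul_residueDegree_top hϖ heB] at hdim
  have hmul : eL * residueDegree v C * residueDegree v L =
      residueDegree v (⊤ : Subalgebra K B) * eC :=
    Nat.eq_of_mul_eq_mul_left (Nat.pos_of_ne_zero hc0) (by linarith)
  have heL0 : 0 < eL := Nat.pos_of_ne_zero fun h => hϖ.lt_one.ne (by rw [heL, h, pow_zero])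
  exact (mul_eq_mul_iff_eq_and_eq_of_pos hfB hfL (Nat.mul_pos heL0 (residueDegree_pos C))
    (Nat.pos_of_ne_zero heC0)).1 hmul

end Swap

section AbsoluteValue

open scoped NNReal

/-- A nonarchimedean absolute value, regarded as a valuation. -/
noncomputable def valuationOfAbsoluteValue (ρ : AbsoluteValue B ℝ) (hna : IsNonarchimedean ρ) :
    Valuation B ℝ≥0 where
  toFun x := ⟨ρ x, ρ.nonneg x⟩
  map_zero' := NNReal.eq (map_zero ρ)
  map_one' := NNReal.eq (map_one ρ)
  map_mul' x y := NNReal.eq (map_mul ρ x y)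
  map_add_le_max' x y := hna x y

variable {ρ : AbsoluteValue B ℝ} (hna : IsNonarchimedean ρ)

lemma isUniformizer_valuationOfAbsoluteValue {S : Subalgebra K B} {π : B} (hmem : π ∈ S)
    (hpos : 0 < ρ π) (hlt : ρ π < 1) (hle : ∀ x ∈ S, x ≠ 0 → ρ x < 1 → ρ x ≤ ρ π) :
    IsUniformizer (valuationOfAbsoluteValue ρ hna) S π where
  mem := hmem
  ne_zero := ρ.pos_iff.1 hpos
  lt_one := hlt
  le_of_lt_one x hx hx1 := by
    obtain rfl | hx0 := eq_or_ne x 0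
    · rw [map_zero]
      exact zero_le
    · exact hle x hx hx0 hx1

lemma resCard_eq_natCard_image (S : Set B) :
    resCard ρ S = Nat.card (residue (valuationOfAbsoluteValue ρ hna) '' (Subtype.val ⁻¹' S)) := by
  let f (x : {b : B // b ∈ S ∧ ρ b ≤ 1}) : ResidueField (valuationOfAbsoluteValue ρ hna) :=
    residue (valuationOfAbsoluteValue ρ hna) ⟨x, x.2.2⟩
  have hf : Set.range f = residue (valuationOfAbsoluteValue ρ hna) '' (Subtype.val ⁻¹' S) := by
    ext a
    exact ⟨fun ⟨x, hx⟩ => ⟨⟨x, x.2.2⟩, x.2.1, hx⟩, fun ⟨x, hxS, hx⟩ => ⟨⟨x, hxS, x.2⟩, hx⟩⟩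
  rw [← hf]
  exact Nat.card_congr ((Quot.congrRight fun _ _ => residue_eq_iff.symm).trans
    (Setoid.quotientKerEquivRange f))

lemma resCard_univ :
    resCard ρ Set.univ = Nat.card (ResidueField (valuationOfAbsoluteValue ρ hna)) := by
  rw [resCard_eq_natCard_image hna, Set.preimage_univ, Set.image_univ,
    Set.range_eq_univ.2 Ideal.Quotient.mk_surjective, Nat.card_univ]

variable [Finite (ResidueField (valuationOfAbsoluteValue ρ hna))] {S T : Subalgebra K B} {f : ℕ}

variable (S) in
lemma resCard_coe :
    resCard ρ (S : Set B) = Nat.card (residueSubfield (valuationOfAbsoluteValue ρ hna) S) :=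
  resCard_eq_natCard_image hna S

variable (S) in
lemma resCard_coe_eq_pow :
    resCard ρ (S : Set B) = resCard ρ ((⊥ : Subalgebra K B) : Set B) ^
      residueDegree (valuationOfAbsoluteValue ρ hna) S := by
  rw [resCard_coe hna, resCard_coe hna, natCard_residueSubfield]

lemma residueDegree_eq_of_resCard_eq_pow
    (h : resCard ρ (S : Set B) = resCard ρ ((⊥ : Subalgebra K B) : Set B) ^ f) :
    residueDegree (valuationOfAbsoluteValue ρ hna) S = f :=
  have hK : 1 < resCard ρ ((⊥ : Subalgebra K B) : Set B) :=
    resCard_coe hna (⊥ : Subalgebra K B) ▸ Finite.one_lt_card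
  Nat.pow_right_injective hK ((resCard_coe_eq_pow hna S).symm.trans h)

lemma residueDegree_eq_mul_of_resCard_eq_pow
    (h : resCard ρ (T : Set B) = resCard ρ (S : Set B) ^ f) :
    residueDegree (valuationOfAbsoluteValue ρ hna) T =
      residueDegree (valuationOfAbsoluteValue ρ hna) S * f :=
  residueDegree_eq_of_resCard_eq_pow hna (by rw [h, resCard_coe_eq_pow hna S, pow_mul])

end AbsoluteValue

section Center

instance : Algebra.IsCentral (Subring.center B) B where
  out x hx := ⟨⟨x, hx⟩, rfl⟩

lemma coe_bot_subalgebra_center :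
    ((⊥ : Subalgebra (Subring.center B) B) : Set B) = Subring.center B := by
  rw [Algebra.coe_bot]
  exact Subtype.range_coe

end Center

end LocalDivisionAlgebra

open LocalDivisionAlgebra

/-- Lemma 3.1: let B be a finite-dimensional central division algebra
over a nonarchimedean local field K (realized as the center of B, with absolute
value ρ, residue field of cardinality q and residue field of B of cardinality q^n),
let L ⊆ B be a division subalgebra and C its centralizer.  If e(L/K), f(L/K),
e(B/C), f(B/C) are the ramification indices (characterized by the valuations of
uniformizers) and residue degrees (characterized by the cardinalities of the
residue fields), then e(L/K) = f(B/C) and f(L/K) = e(B/C). -/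
theorem ramification_residue_swap
    (B : Type*) [DivisionRing B] (ρ : AbsoluteValue B ℝ)
    (hna : IsNonarchimedean ρ)
    -- B is a local division algebra: finite residue field, discrete valuation
    (q n : ℕ) (hq : 2 ≤ q) (hn : 0 < n)
    (hresK : resCard ρ (Subring.center B : Set B) = q)
    (hresB : resCard ρ (Set.univ : Set B) = q ^ n)
    -- L is a division subalgebra containing the center K, C its centralizer
    (L : Subring B) (hKL : Subring.center B ≤ L)
    (hLdiv : ∀ x ∈ L, x ≠ 0 → x⁻¹ ∈ L)
    (C : Subring B) (hC : C = Subring.centralizer (L : Set B))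
    -- uniformizers of K, L, C and B
    (πK πL πC πB : B)
    (hπKmem : πK ∈ Subring.center B) (hπLmem : πL ∈ L) (hπCmem : πC ∈ C)
    (hπK : 0 < ρ πK ∧ ρ πK < 1 ∧ ∀ x ∈ Subring.center B, ρ x < 1 → ρ x ≤ ρ πK)
    (hπL : 0 < ρ πL ∧ ρ πL < 1 ∧ ∀ x ∈ L, ρ x < 1 → ρ x ≤ ρ πL)
    (hπC : 0 < ρ πC ∧ ρ πC < 1 ∧ ∀ x ∈ C, ρ x < 1 → ρ x ≤ ρ πC)
    (hπB : 0 < ρ πB ∧ ρ πB < 1 ∧ ∀ x : B, x ≠ 0 → ρ x < 1 → ρ x ≤ ρ πB)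
    (hdisc : ∀ x : B, x ≠ 0 → ∃ k : ℤ, ρ x = ρ πB ^ k)
    -- ramification indices: e(D/D') is defined by ρ(π_{D'}) = ρ(π_D)^{e(D/D')}
    (eLK eBC : ℕ)
    (heLK : ρ πK = ρ πL ^ eLK)
    (heBC : ρ πC = ρ πB ^ eBC)
    -- residue degrees: f(D/D') = [residue field of D : residue field of D']
    (fLK fBC : ℕ)
    (hfLK : resCard ρ (L : Set B) = q ^ fLK)
    (hfBC : resCard ρ (Set.univ : Set B) = resCard ρ (C : Set B) ^ fBC) :
    eLK = fBC ∧ fLK = eBC := by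
  subst hC
  let v := valuationOfAbsoluteValue ρ hna
  let ϖ : Subring.center B := ⟨πK, hπKmem⟩
  let L' : Subalgebra (Subring.center B) B := { L with algebraMap_mem' := fun k => hKL k.2 }
  let C' := Subalgebra.centralizer (Subring.center B) (L' : Set B)
  have : Finite (ResidueField v) :=
    Nat.finite_of_card_ne_zero (by rw [← resCard_univ hna, hresB]; positivity)
  have huK : IsUniformizer v (⊥ : Subalgebra (Subring.center B) B) (algebraMap _ B ϖ) :=
    isUniformizer_valuationOfAbsoluteValue hna (Subalgebra.algebraMap_mem _ ϖ) hπK.1 hπK.2.1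
      fun x hx _ => hπK.2.2 x (coe_bot_subalgebra_center.subset hx)
  have huL : IsUniformizer v L' πL := isUniformizer_valuationOfAbsoluteValue hna hπLmem hπL.1
    hπL.2.1 fun x hx _ => hπL.2.2 x hx
  have huC : IsUniformizer v C' πC := isUniformizer_valuationOfAbsoluteValue hna hπCmem hπC.1
    hπC.2.1 fun x hx _ => hπC.2.2 x hx
  have huB : IsUniformizer v (⊤ : Subalgebra (Subring.center B) B) πB :=
    isUniformizer_valuationOfAbsoluteValue hna trivial hπB.1 hπB.2.1 fun x _ => hπB.2.2 x
  have hfL : residueDegree v L' = fLK := residueDegree_eq_of_resCard_eq_pow hna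
    (by rw [coe_bot_subalgebra_center, hresK]; exact hfLK)
  have hfB : residueDegree v (⊤ : Subalgebra (Subring.center B) B) = residueDegree v C' * fBC :=
    residueDegree_eq_mul_of_resCard_eq_pow hna hfBC
  obtain ⟨htop, hdegL⟩ := residueDegree_top_eq_and_residueDegree_eq huK huL huC huB
    (NNReal.eq heLK) (NNReal.eq heBC)
  rw [hfB, mul_comm] at htop
  exact ⟨Nat.eq_of_mul_eq_mul_left (residueDegree_pos C') htop, hfL.symm.trans hdegL⟩
end

section
/- Let B be a noncommutative central division algebra over a local field and let Δ₀ = M₂(O_B) with maximal two-sided ideal M = π_BΔ₀. Then the order Δ₀^{[2]} = {x ∈ Δ₀ : x mod M² is central in Δ₀/M²} is not the intersection of any three maximal orders of M₂(B), because (i) Δ₀^{[2]} is the intersection of the maximal orders in the ball of radius 2 around Δ₀, whose branch is the full ball of radius 2, (ii) the intersection of any three maximal orders contains a conjugate of O_B (diagonally embedded), and (iii) the branch S(O_B) contains no ball of radius 2. -/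
noncomputable section

variable {B : Type*} [DivisionRing B]

/-- A maximal order of M₂(B): a conjugate u·M₂(O_B)·u⁻¹ of the standard maximal
order M₂(O_B). -/
def IsMaxOrder (ρ : AbsoluteValue B ℝ) (Δ : Set (Matrix (Fin 2) (Fin 2) B)) :
    Prop :=
  ∃ u uinv : Matrix (Fin 2) (Fin 2) B, u * uinv = 1 ∧ uinv * u = 1 ∧
    Δ = {x | ∃ m : Matrix (Fin 2) (Fin 2) B,
      (∀ i j, ρ (m i j) ≤ 1) ∧ x = u * m * uinv}

/-- The order Δ₀^{[t]} = {x ∈ M₂(O_B) : x mod M^t is central in M₂(O_B)/M^t},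
M = π_B·M₂(O_B): integral matrices congruent mod π_B^t to a scalar matrix c·Id
with c central modulo π_B^t O_B. -/
def congruenceOrder (ρ : AbsoluteValue B ℝ) (πB : B) (t : ℕ) :
    Set (Matrix (Fin 2) (Fin 2) B) :=
  {h | (∀ i j, ρ (h i j) ≤ 1) ∧
    ∃ c : B, ρ c ≤ 1 ∧ (∀ x : B, ρ x ≤ 1 → ρ (c * x - x * c) ≤ ρ πB ^ t) ∧
      ∀ i j, ρ (h i j - (if i = j then c else 0)) ≤ ρ πB ^ t}

/-!
For units `u₁, u₂, u₃` of `M₂(B)`, the Cartan decomposition makes `u₁⁻¹u₂` diagonal and the Iwasawa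
decomposition makes `u₁⁻¹u₃` upper triangular, up to `GL₂(O_B)` on the relevant sides. A triangular
matrix is `A N A'` with `A, A'` diagonal and `N ∈ {1, (1 1; 0 1)}`, and `N` commutes with all scalar
matrices; hence the three maximal orders share a conjugate `g O_B g⁻¹` of the diagonal copy of
`O_B`. If that conjugate lay in `Δ₀^{[t]}` with `t ≥ 2`, all commutators in `O_B` would lie in
`π² O_B`. Whenever `πⁿ O_B` contains all commutators, `x ↦ [x, y]` is a derivation modulo
`πⁿ⁺¹ O_B` that kills `q`-th powers, where `q` is the order of the residue field; so the
commutators lie in `πⁿ⁺¹ O_B` as well, and inductively in every power, whence `B` is commutative.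
-/

section Ultrametric

variable {R : Type*} [Ring R] {ρ : AbsoluteValue R ℝ}

lemma abv_add_le_of_le (hna : IsNonarchimedean ρ) {x y : R} {C : ℝ} (hx : ρ x ≤ C)
    (hy : ρ y ≤ C) : ρ (x + y) ≤ C :=
  (hna x y).trans (max_le hx hy)

lemma abv_sub_le_of_le (hna : IsNonarchimedean ρ) {x y : R} {C : ℝ} (hx : ρ x ≤ C)
    (hy : ρ y ≤ C) : ρ (x - y) ≤ C :=
  sub_eq_add_neg x y ▸ abv_add_le_of_le hna hx ((ρ.map_neg y).trans_le hy)

lemma abv_sum_le_of_forall_le (hna : IsNonarchimedean ρ) {ι : Type*} {s : Finset ι} {f : ι → R}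
    {C : ℝ} (hC : 0 ≤ C) (h : ∀ i ∈ s, ρ (f i) ≤ C) : ρ (∑ i ∈ s, f i) ≤ C :=
  Finset.sum_induction f (ρ · ≤ C) (fun _ _ => abv_add_le_of_le hna) (by simpa using hC) h

lemma abv_mul_le_of_le {x y : R} {C D : ℝ} (hx : ρ x ≤ C) (hy : ρ y ≤ D) : ρ (x * y) ≤ C * D := by
  rw [ρ.map_mul]
  exact mul_le_mul hx hy (ρ.nonneg _) ((ρ.nonneg _).trans hx)

lemma abv_pow_le_one [Nontrivial R] {x : R} (hx : ρ x ≤ 1) (m : ℕ) : ρ (x ^ m) ≤ 1 := by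
  rw [map_pow]
  exact pow_le_one₀ (ρ.nonneg x) hx

end Ultrametric

section EntryBounded

variable {R n : Type*} [Ring R] {ρ : AbsoluteValue R ℝ} {C D : ℝ}

/-- Every entry of `m` has absolute value at most `C`. For `C = 1` this is membership in `Mₙ(O)`,
for `C = ρ π ^ t` membership in `πᵗ Mₙ(O)`. -/
def EntryBounded (ρ : AbsoluteValue R ℝ) (C : ℝ) (m : Matrix n n R) : Prop :=
  ∀ i j, ρ (m i j) ≤ C

namespace EntryBounded

variable {m m' : Matrix n n R}

lemma add (hna : IsNonarchimedean ρ) (hm : EntryBounded ρ C m) (hm' : EntryBounded ρ C m') :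
    EntryBounded ρ C (m + m') :=
  fun i j => abv_add_le_of_le hna (hm i j) (hm' i j)

lemma sub (hna : IsNonarchimedean ρ) (hm : EntryBounded ρ C m) (hm' : EntryBounded ρ C m') :
    EntryBounded ρ C (m - m') :=
  fun i j => abv_sub_le_of_le hna (hm i j) (hm' i j)

lemma mul [Fintype n] (hna : IsNonarchimedean ρ) (hm : EntryBounded ρ C m)
    (hm' : EntryBounded ρ D m') : EntryBounded ρ (C * D) (m * m') := fun i j =>
  abv_sum_le_of_forall_le hna
    (mul_nonneg ((ρ.nonneg _).trans (hm i j)) ((ρ.nonneg _).trans (hm' i j)))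
    fun k _ => abv_mul_le_of_le (hm i k) (hm' k j)

lemma integral_mul [Fintype n] (hna : IsNonarchimedean ρ) (hm : EntryBounded ρ 1 m)
    (hm' : EntryBounded ρ 1 m') : EntryBounded ρ 1 (m * m') :=
  one_mul (1 : ℝ) ▸ hm.mul hna hm'

lemma lie [Fintype n] (hna : IsNonarchimedean ρ) (hm : EntryBounded ρ C m)
    (hm' : EntryBounded ρ D m') : EntryBounded ρ (C * D) ⁅m, m'⁆ :=
  (hm.mul hna hm').sub hna (mul_comm C D ▸ hm'.mul hna hm)

lemma diagonal [DecidableEq n] {d : n → R} (hd : ∀ i, ρ (d i) ≤ C) :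
    EntryBounded ρ C (Matrix.diagonal d) := by
  intro i j
  rw [Matrix.diagonal_apply]
  split_ifs
  · exact hd i
  · simpa using (ρ.nonneg _).trans (hd i)

lemma single [DecidableEq n] {i j : n} {c : R} (hc : ρ c ≤ C) :
    EntryBounded ρ C (Matrix.single i j c) := by
  intro k l
  rw [Matrix.single_apply]
  split_ifs
  · exact hc
  · simpa using (ρ.nonneg _).trans hc

lemma one [DecidableEq n] [Nontrivial R] : EntryBounded ρ 1 (1 : Matrix n n R) :=
  Matrix.diagonal_one (n := n) (α := R) ▸ diagonal fun _ => ρ.map_one.le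

end EntryBounded

end EntryBounded

lemma scalar_lie_scalar {R n : Type*} [Ring R] [Fintype n] [DecidableEq n] (x y : R) :
    ⁅Matrix.scalar n x, Matrix.scalar n y⁆ = Matrix.scalar n ⁅x, y⁆ := by
  simp only [Ring.lie_def, map_sub, map_mul]

-- Apply the eigenvalue-type equation `N w = w z`, with `N = w z w⁻¹`, to a largest entry of `w`.
lemma abv_le_of_entryBounded_conj_scalar {R n : Type*} [Ring R] [Nontrivial R] [Fintype n]
    [DecidableEq n] [Nonempty n] {ρ : AbsoluteValue R ℝ} (hna : IsNonarchimedean ρ)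
    (w : (Matrix n n R)ˣ) {z : R} {C : ℝ}
    (h : EntryBounded ρ C (w.val * Matrix.scalar n z * w⁻¹.val)) : ρ z ≤ C := by
  obtain ⟨⟨i, j⟩, hmax⟩ := Finite.exists_max fun p : n × n => ρ (w.val p.1 p.2)
  have hpos : 0 < ρ (w.val i j) := by
    refine (ρ.nonneg _).lt_of_ne fun h0 => w.ne_zero ?_
    ext k l
    exact ρ.eq_zero.1 (le_antisymm (h0 ▸ hmax (k, l)) (ρ.nonneg _))
  have hentry : ρ ((w.val * Matrix.scalar n z) i j) ≤ C * ρ (w.val i j) := by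
    rw [← Units.inv_mul_cancel_right (w.val * Matrix.scalar n z) w]
    exact h.mul hna (fun k l => hmax (k, l)) i j
  rw [Matrix.scalar_apply, Matrix.mul_diagonal, ρ.map_mul, mul_comm] at hentry
  exact le_of_mul_le_mul_right hentry hpos

section IntegralGL

variable {R n : Type*} [Ring R] [Fintype n] [DecidableEq n] {ρ : AbsoluteValue R ℝ}

/-- The group `GLₙ(O)` of the invertible matrices that are integral together with their inverse. -/
def integralGL [Nontrivial R] (n : Type*) [Fintype n] [DecidableEq n] (hna : IsNonarchimedean ρ) :
    Subgroup (Matrix n n R)ˣ where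
  carrier := {w | EntryBounded ρ 1 w.val ∧ EntryBounded ρ 1 w⁻¹.val}
  mul_mem' {v w} hv hw := by
    refine ⟨hv.1.integral_mul hna hw.1, ?_⟩
    rw [mul_inv_rev]
    exact hw.2.integral_mul hna hv.2
  one_mem' := ⟨.one, by simpa using EntryBounded.one⟩
  inv_mem' hw := ⟨hw.2, by simpa using hw.1⟩

/-- The elementary matrix with entry `c` in position `(i, j)`, as a unit; `Matrix.transvection`
requires a commutative ring. -/
def transvectionUnit {i j : n} (hij : i ≠ j) (c : R) : (Matrix n n R)ˣ where
  val := 1 + Matrix.single i j c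
  inv := 1 + Matrix.single i j (-c)
  val_inv := by simp [Matrix.add_mul, Matrix.mul_add, hij.symm, ← Matrix.single_add, add_assoc]
  inv_val := by simp [Matrix.add_mul, Matrix.mul_add, hij.symm, ← Matrix.single_add, add_assoc]

lemma transvectionUnit_mem_integralGL [Nontrivial R] (hna : IsNonarchimedean ρ) {i j : n}
    (hij : i ≠ j) {c : R} (hc : ρ c ≤ 1) : transvectionUnit hij c ∈ integralGL n hna :=
  ⟨.add hna .one (.single hc), .add hna .one (.single ((ρ.map_neg c).trans_le hc))⟩

/-- Permutation matrices as units. -/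
def permUnit (R : Type*) [Ring R] (σ : Equiv.Perm n) : (Matrix n n R)ˣ :=
  Matrix.permMatrixHom.toHomUnits σ

lemma permUnit_mul (σ : Equiv.Perm n) (w : Matrix n n R) :
    (permUnit R σ).val * w = w.submatrix σ.symm id := by
  simp [permUnit, PEquiv.toMatrix_toPEquiv_mul]

lemma mul_permUnit (σ : Equiv.Perm n) (w : Matrix n n R) :
    w * (permUnit R σ).val = w.submatrix id σ := by
  simp [permUnit, PEquiv.mul_toMatrix_toPEquiv, Equiv.Perm.inv_def]

lemma permUnit_mem_integralGL [Nontrivial R] (hna : IsNonarchimedean ρ) (σ : Equiv.Perm n) :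
    permUnit R σ ∈ integralGL n hna := by
  have hbound (τ : Equiv.Perm n) : EntryBounded ρ 1 (permUnit R τ).val := by
    rw [← mul_one (permUnit R τ).val, permUnit_mul]
    exact fun i j => EntryBounded.one (τ.symm i) j
  refine ⟨hbound σ, ?_⟩
  rw [permUnit, ← map_inv]
  exact hbound σ⁻¹

end IntegralGL

section Decompositions

variable {ρ : AbsoluteValue B ℝ}

lemma abv_inv_mul_le_one {a b : B} (h : ρ b ≤ ρ a) : ρ (a⁻¹ * b) ≤ 1 := by
  rw [ρ.map_mul, map_inv₀, inv_mul_eq_div]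
  exact div_le_one_of_le₀ h (ρ.nonneg a)

lemma abv_mul_inv_le_one {a b : B} (h : ρ b ≤ ρ a) : ρ (b * a⁻¹) ≤ 1 := by
  rw [ρ.map_mul, mul_comm, ← ρ.map_mul]
  exact abv_inv_mul_le_one h

lemma eq_zero_of_abv_le {a b : B} (h : ρ b ≤ ρ a) (ha : a = 0) : b = 0 :=
  ρ.eq_zero.1 (le_antisymm (by simpa [ha] using h) (ρ.nonneg b))

lemma mul_inv_mul_cancel_of_abv_le {a b : B} (h : ρ b ≤ ρ a) : a * (a⁻¹ * b) = b := by
  rcases eq_or_ne a 0 with rfl | ha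
  · simp [eq_zero_of_abv_le h]
  · exact mul_inv_cancel_left₀ ha b

lemma mul_inv_mul_cancel_right_of_abv_le {a b : B} (h : ρ b ≤ ρ a) : b * a⁻¹ * a = b := by
  rw [← div_eq_mul_inv, div_mul_cancel_of_imp (eq_zero_of_abv_le h)]

lemma iwasawa_decomposition (hna : IsNonarchimedean ρ)
    (w : Matrix (Fin 2) (Fin 2) B) :
    ∃ c ∈ integralGL (Fin 2) hna, (w * c.val) 1 0 = 0 := by
  obtain ⟨j, hj⟩ := Finite.exists_max fun j => ρ (w 1 j)
  set v := w * (permUnit B (Equiv.swap 1 j)).val with hv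
  have hle : ρ (v 1 0) ≤ ρ (v 1 1) := by
    simpa [hv, mul_permUnit] using hj (Equiv.swap 1 j 0)
  refine ⟨permUnit B (Equiv.swap 1 j) *
    transvectionUnit (i := 1) (j := 0) one_ne_zero (-((v 1 1)⁻¹ * v 1 0)), mul_mem
      (permUnit_mem_integralGL hna _) (transvectionUnit_mem_integralGL hna _ ?_), ?_⟩
  · rw [ρ.map_neg]
    exact abv_inv_mul_le_one hle
  · rw [Units.val_mul, ← mul_assoc, ← hv]
    simp [transvectionUnit, Matrix.mul_add, mul_inv_mul_cancel_of_abv_le hle]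

lemma cartan_decomposition_of_forall_abv_le (hna : IsNonarchimedean ρ)
    {w : Matrix (Fin 2) (Fin 2) B} (h : ∀ i j, ρ (w i j) ≤ ρ (w 0 0)) :
    ∃ a ∈ integralGL (Fin 2) hna, ∃ b ∈ integralGL (Fin 2) hna,
      (a.val * w * b.val).IsDiag := by
  refine ⟨transvectionUnit (i := 1) (j := 0) one_ne_zero (-(w 1 0 * (w 0 0)⁻¹)),
    transvectionUnit_mem_integralGL hna _ ?_,
    transvectionUnit (i := 0) (j := 1) zero_ne_one (-((w 0 0)⁻¹ * w 0 1)),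
    transvectionUnit_mem_integralGL hna _ ?_, ?_⟩
  · rw [ρ.map_neg]
    exact abv_mul_inv_le_one (h 1 0)
  · rw [ρ.map_neg]
    exact abv_inv_mul_le_one (h 0 1)
  · have hrow : w 1 0 * (w 0 0)⁻¹ * w 0 0 = w 1 0 :=
      mul_inv_mul_cancel_right_of_abv_le (h 1 0)
    have hcol : w 0 0 * ((w 0 0)⁻¹ * w 0 1) = w 0 1 := mul_inv_mul_cancel_of_abv_le (h 0 1)
    intro i j hij
    fin_cases i <;> fin_cases j <;>
      simp [transvectionUnit, Matrix.mul_add, Matrix.add_mul, hrow, hcol] at hij ⊢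

lemma cartan_decomposition (hna : IsNonarchimedean ρ)
    (w : Matrix (Fin 2) (Fin 2) B) :
    ∃ a ∈ integralGL (Fin 2) hna, ∃ b ∈ integralGL (Fin 2) hna,
      (a.val * w * b.val).IsDiag := by
  obtain ⟨⟨i, j⟩, hmax⟩ := Finite.exists_max fun p : Fin 2 × Fin 2 => ρ (w p.1 p.2)
  obtain ⟨a, ha, b, hb, hdiag⟩ := cartan_decomposition_of_forall_abv_le hna
    (w := (permUnit B (Equiv.swap 0 i)).val * w * (permUnit B (Equiv.swap 0 j)).val) (by
      intro k l
      simpa [mul_permUnit, permUnit_mul] using hmax (Equiv.swap 0 i k, Equiv.swap 0 j l))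
  refine ⟨a * permUnit B (Equiv.swap 0 i), mul_mem ha (permUnit_mem_integralGL hna _),
    permUnit B (Equiv.swap 0 j) * b, mul_mem (permUnit_mem_integralGL hna _) hb, ?_⟩
  simpa only [Units.val_mul, mul_assoc] using hdiag

/-- The homomorphism from diagonal entries to invertible diagonal matrices. -/
def diagonalUnit {R n : Type*} [Ring R] [Fintype n] [DecidableEq n] :
    (n → R)ˣ →* (Matrix n n R)ˣ :=
  Units.map (Matrix.diagonalRingHom n R).toMonoidHom

lemma diag_ne_zero_of_upperTriangular (w : (Matrix (Fin 2) (Fin 2) B)ˣ) (hw : w.val 1 0 = 0) :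
    w.val 0 0 ≠ 0 ∧ w.val 1 1 ≠ 0 := by
  have h₀ : (w⁻¹.val * w.val) 0 0 = 1 := by simp
  have h₁ : (w.val * w⁻¹.val) 1 1 = 1 := by simp
  rw [Matrix.mul_apply, Fin.sum_univ_two, hw, mul_zero, add_zero] at h₀
  rw [Matrix.mul_apply, Fin.sum_univ_two, hw, zero_mul, zero_add] at h₁
  exact ⟨right_ne_zero_of_mul_eq_one h₀, left_ne_zero_of_mul_eq_one h₁⟩

lemma exists_eq_diagonalUnit {p r : B} (hp : p ≠ 0) (hr : r ≠ 0) :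
    ∃ d : (Fin 2 → B)ˣ, (diagonalUnit d).val = !![p, 0; 0, r] := by
  refine ⟨⟨![p, r], ![p⁻¹, r⁻¹], ?_, ?_⟩, ?_⟩
  · ext i
    fin_cases i <;> simp [hp, hr]
  · ext i
    fin_cases i <;> simp [hp, hr]
  · ext i j
    fin_cases i <;> fin_cases j <;> simp [diagonalUnit]

lemma exists_eq_diagonalUnit_of_isDiag (w : (Matrix (Fin 2) (Fin 2) B)ˣ) (hw : w.val.IsDiag) :
    ∃ d, w = diagonalUnit d := by
  obtain ⟨h₀, h₁⟩ := diag_ne_zero_of_upperTriangular w (hw one_ne_zero)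
  obtain ⟨d, hd⟩ := exists_eq_diagonalUnit h₀ h₁
  refine ⟨d, Units.ext ?_⟩
  rw [hd, Matrix.eta_fin_two w.val, hw zero_ne_one, hw one_ne_zero]
  rfl

-- `(p β; 0 r) = diag(β, r) (1 1; 0 1) diag(β⁻¹p, 1)`.
lemma exists_eq_diagonalUnit_mul_mul_diagonalUnit (w : (Matrix (Fin 2) (Fin 2) B)ˣ)
    (hw : w.val 1 0 = 0) :
    ∃ (d d' : (Fin 2 → B)ˣ) (N : (Matrix (Fin 2) (Fin 2) B)ˣ),
      (∀ x, Commute (Matrix.scalar (Fin 2) x) N.val) ∧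
        w = diagonalUnit d * N * diagonalUnit d' := by
  obtain ⟨hp, hr⟩ := diag_ne_zero_of_upperTriangular w hw
  by_cases hβ : w.val 0 1 = 0
  · obtain ⟨d, hd⟩ := exists_eq_diagonalUnit_of_isDiag w (by
      intro i j hij
      fin_cases i <;> fin_cases j <;> simp_all)
    exact ⟨d, 1, 1, by simp, by simpa using hd⟩
  · obtain ⟨d, hd⟩ := exists_eq_diagonalUnit hβ hr
    obtain ⟨d', hd'⟩ := exists_eq_diagonalUnit (mul_ne_zero (inv_ne_zero hβ) hp) one_ne_zero
    refine ⟨d, d', transvectionUnit zero_ne_one 1, fun x => ?_, Units.ext ?_⟩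
    · rw [Matrix.scalar_commute_iff]
      ext i j
      fin_cases i <;> fin_cases j <;> simp [transvectionUnit]
    · have hN : (transvectionUnit zero_ne_one 1 : (Matrix (Fin 2) (Fin 2) B)ˣ).val =
          !![1, 1; 0, 1] := by
        ext i j
        fin_cases i <;> fin_cases j <;> simp [transvectionUnit]
      rw [Units.val_mul, Units.val_mul, hd, hN, hd', Matrix.eta_fin_two w.val, hw]
      simp [hβ]

end Decompositions

section CommonScalars

/-- The conjugators `w` for which `w⁻¹ Mₙ(O) w` contains the scalar matrices over `O`, that is, for
which this maximal order is a vertex of the branch `S(O)`. -/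
def integralScalarConjugators {R : Type*} [Ring R] (n : Type*) [Fintype n] [DecidableEq n]
    (ρ : AbsoluteValue R ℝ) : Set (Matrix n n R)ˣ :=
  {w | ∀ x, ρ x ≤ 1 → EntryBounded ρ 1 (w.val * Matrix.scalar n x * w⁻¹.val)}

section Ring

variable {R n : Type*} [Ring R] [Fintype n] [DecidableEq n] {ρ : AbsoluteValue R ℝ}

lemma diagonalUnit_mem_integralScalarConjugators [Nontrivial R] (d : (n → R)ˣ) :
    diagonalUnit d ∈ integralScalarConjugators n ρ := by
  intro x hx
  have hconj : (diagonalUnit d).val * Matrix.scalar n x * (diagonalUnit d)⁻¹.val =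
      Matrix.diagonal fun i => d.val i * x * d⁻¹.val i := by
    rw [← map_inv]
    simp [diagonalUnit]
  rw [hconj]
  refine .diagonal fun i => ?_
  rw [ρ.map_mul, ρ.map_mul, mul_right_comm, ← ρ.map_mul, ← Pi.mul_apply, d.mul_inv]
  simpa using hx

lemma mul_mem_integralScalarConjugators [Nontrivial R] (hna : IsNonarchimedean ρ)
    {k w : (Matrix n n R)ˣ} (hk : k ∈ integralGL n hna) (hw : w ∈ integralScalarConjugators n ρ) :
    k * w ∈ integralScalarConjugators n ρ := by
  intro x hx
  rw [mul_inv_rev, Units.val_mul, Units.val_mul, mul_assoc k.val, mul_assoc k.val,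
    ← mul_assoc _ w⁻¹.val, ← mul_assoc]
  exact (hk.1.integral_mul hna (hw x hx)).integral_mul hna hk.2

lemma mul_mem_integralScalarConjugators_of_commute {w N : (Matrix n n R)ˣ}
    (hw : w ∈ integralScalarConjugators n ρ) (hN : ∀ x, Commute (Matrix.scalar n x) N.val) :
    w * N ∈ integralScalarConjugators n ρ := by
  intro x hx
  rw [mul_inv_rev, Units.val_mul, Units.val_mul, mul_assoc w.val, ← (hN x).eq, ← mul_assoc,
    ← mul_assoc, Units.mul_inv_cancel_right]
  exact hw x hx

end Ring

variable {ρ : AbsoluteValue B ℝ}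

lemma exists_forall_inv_mul_mem_integralScalarConjugators (hna : IsNonarchimedean ρ)
    (u₁ u₂ u₃ : (Matrix (Fin 2) (Fin 2) B)ˣ) :
    ∃ g, u₁⁻¹ * g ∈ integralScalarConjugators (Fin 2) ρ ∧
      u₂⁻¹ * g ∈ integralScalarConjugators (Fin 2) ρ ∧
      u₃⁻¹ * g ∈ integralScalarConjugators (Fin 2) ρ := by
  obtain ⟨a, ha, b, hb, hdiag⟩ := cartan_decomposition hna (u₁⁻¹ * u₂).val
  obtain ⟨D, hD⟩ := exists_eq_diagonalUnit_of_isDiag (a * (u₁⁻¹ * u₂) * b) hdiag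
  obtain ⟨c, hc, hT⟩ := iwasawa_decomposition hna (a * u₁⁻¹ * u₃).val
  obtain ⟨A, A', N, hN, hANA'⟩ :=
    exists_eq_diagonalUnit_mul_mul_diagonalUnit (a * u₁⁻¹ * u₃ * c) hT
  have hN' (x : B) : Commute (Matrix.scalar (Fin 2) x) N⁻¹.val := (hN x).units_inv_right
  have h₂ : u₂⁻¹ * (u₁ * a⁻¹ * diagonalUnit A) = b * diagonalUnit (D⁻¹ * A) := by
    rw [map_mul, map_inv, ← hD]
    group
  have h₃ : u₃⁻¹ * (u₁ * a⁻¹ * diagonalUnit A) = c * diagonalUnit A'⁻¹ * N⁻¹ := by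
    rw [eq_inv_mul_of_mul_eq hANA', map_inv]
    group
  refine ⟨u₁ * a⁻¹ * diagonalUnit A, ?_, ?_, ?_⟩
  · rw [mul_assoc, inv_mul_cancel_left]
    exact mul_mem_integralScalarConjugators hna (inv_mem ha)
      (diagonalUnit_mem_integralScalarConjugators A)
  · rw [h₂]
    exact mul_mem_integralScalarConjugators hna hb (diagonalUnit_mem_integralScalarConjugators _)
  · rw [h₃]
    exact mul_mem_integralScalarConjugators_of_commute (mul_mem_integralScalarConjugators hna hc
      (diagonalUnit_mem_integralScalarConjugators _)) hN'

lemma IsMaxOrder.exists_unit {Δ : Set (Matrix (Fin 2) (Fin 2) B)} (hΔ : IsMaxOrder ρ Δ) :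
    ∃ u : (Matrix (Fin 2) (Fin 2) B)ˣ, ∀ x, x ∈ Δ ↔ EntryBounded ρ 1 (u⁻¹.val * x * u.val) := by
  obtain ⟨v, v', hvv', hv'v, rfl⟩ := hΔ
  set u : (Matrix (Fin 2) (Fin 2) B)ˣ := ⟨v, v', hvv', hv'v⟩
  refine ⟨u, fun x => ⟨?_, fun hx => ⟨u⁻¹.val * x * u.val, hx, ?_⟩⟩⟩
  · rintro ⟨m, hm, rfl⟩
    change EntryBounded ρ 1 (u⁻¹.val * (u.val * m * u⁻¹.val) * u.val)
    simp only [mul_assoc, Units.inv_mul_cancel_left, Units.inv_mul, mul_one]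
    exact hm
  · change x = u.val * (u⁻¹.val * x * u.val) * u⁻¹.val
    simp only [mul_assoc, Units.mul_inv_cancel_left, Units.mul_inv, mul_one]

lemma exists_forall_conj_scalar_mem_inter (hna : IsNonarchimedean ρ)
    {Δ₁ Δ₂ Δ₃ : Set (Matrix (Fin 2) (Fin 2) B)} (h₁ : IsMaxOrder ρ Δ₁) (h₂ : IsMaxOrder ρ Δ₂)
    (h₃ : IsMaxOrder ρ Δ₃) :
    ∃ g : (Matrix (Fin 2) (Fin 2) B)ˣ, ∀ x, ρ x ≤ 1 →
      g.val * Matrix.scalar (Fin 2) x * g⁻¹.val ∈ Δ₁ ∩ Δ₂ ∩ Δ₃ := by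
  obtain ⟨u₁, hu₁⟩ := h₁.exists_unit
  obtain ⟨u₂, hu₂⟩ := h₂.exists_unit
  obtain ⟨u₃, hu₃⟩ := h₃.exists_unit
  obtain ⟨g, hg₁, hg₂, hg₃⟩ := exists_forall_inv_mul_mem_integralScalarConjugators hna u₁ u₂ u₃
  have hconj (u : (Matrix (Fin 2) (Fin 2) B)ˣ) (x : B) :
      u⁻¹.val * (g.val * Matrix.scalar (Fin 2) x * g⁻¹.val) * u.val =
        (u⁻¹ * g).val * Matrix.scalar (Fin 2) x * (u⁻¹ * g)⁻¹.val := by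
    simp only [mul_inv_rev, inv_inv, Units.val_mul, mul_assoc]
  refine ⟨g, fun x hx => ⟨⟨?_, ?_⟩, ?_⟩⟩
  · exact (hu₁ _).2 (hconj u₁ x ▸ hg₁ x hx)
  · exact (hu₂ _).2 (hconj u₂ x ▸ hg₂ x hx)
  · exact (hu₃ _).2 (hconj u₃ x ▸ hg₃ x hx)

end CommonScalars

section CongruenceOrder

variable {ρ : AbsoluteValue B ℝ}

lemma entryBounded_lie_of_mem_congruenceOrder (hna : IsNonarchimedean ρ) {π : B} {t : ℕ}
    {h k : Matrix (Fin 2) (Fin 2) B} (hh : h ∈ congruenceOrder ρ π t)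
    (hk : k ∈ congruenceOrder ρ π t) : EntryBounded ρ (ρ π ^ t) ⁅h, k⁆ := by
  obtain ⟨-, c, hc, hc_central, hhc⟩ := hh
  obtain ⟨hk_integral, d, hd, -, hkd⟩ := hk
  set C := Matrix.scalar (Fin 2) c
  set D := Matrix.scalar (Fin 2) d
  have hhC : EntryBounded ρ (ρ π ^ t) (h - C) := hhc
  have hkD : EntryBounded ρ (ρ π ^ t) (k - D) := hkd
  have hC : EntryBounded ρ 1 C := .diagonal fun _ => hc
  have hCD : EntryBounded ρ (ρ π ^ t) ⁅C, D⁆ :=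
    scalar_lie_scalar (n := Fin 2) c d ▸ .diagonal fun _ => hc_central d hd
  have hsplit : ⁅h, k⁆ = ⁅h - C, k⁆ + ⁅C, k - D⁆ + ⁅C, D⁆ := by
    simp only [Ring.lie_def, sub_mul, mul_sub]
    abel
  rw [hsplit]
  refine .add hna (.add hna ?_ ?_) hCD
  · exact mul_one (ρ π ^ t) ▸ hhC.lie hna hk_integral
  · exact one_mul (ρ π ^ t) ▸ hC.lie hna hkD

lemma abv_lie_le_of_forall_conj_scalar_mem_congruenceOrder (hna : IsNonarchimedean ρ) {π : B}
    {t : ℕ} (g : (Matrix (Fin 2) (Fin 2) B)ˣ)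
    (hg : ∀ x, ρ x ≤ 1 → g.val * Matrix.scalar (Fin 2) x * g⁻¹.val ∈ congruenceOrder ρ π t)
    {x y : B} (hx : ρ x ≤ 1) (hy : ρ y ≤ 1) : ρ ⁅x, y⁆ ≤ ρ π ^ t := by
  have hconj : ⁅g.val * Matrix.scalar (Fin 2) x * g⁻¹.val,
      g.val * Matrix.scalar (Fin 2) y * g⁻¹.val⁆ =
        g.val * Matrix.scalar (Fin 2) ⁅x, y⁆ * g⁻¹.val := by
    simp only [Ring.lie_def, map_sub, map_mul, mul_sub, sub_mul, mul_assoc,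
      Units.inv_mul_cancel_left]
  exact abv_le_of_entryBounded_conj_scalar hna g
    (hconj ▸ entryBounded_lie_of_mem_congruenceOrder hna (hg x hx) (hg y hy))

end CongruenceOrder

section ResidueRing

variable {R : Type*} [Ring R] [Nontrivial R] {ρ : AbsoluteValue R ℝ}

/-- The valuation ring `O` of a nonarchimedean absolute value on a possibly noncommutative ring. -/
def integerRing (hna : IsNonarchimedean ρ) : Subring R where
  carrier := {x | ρ x ≤ 1}
  mul_mem' hx hy := one_mul (1 : ℝ) ▸ abv_mul_le_of_le hx hy
  one_mem' := ρ.map_one.le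
  add_mem' hx hy := abv_add_le_of_le hna hx hy
  zero_mem' := by simp
  neg_mem' {x} hx := (ρ.map_neg x).trans_le hx

/-- The two-sided ideal of topologically nilpotent elements of `O`; the quotient by it is the
residue ring. -/
def openUnitBallIdeal (hna : IsNonarchimedean ρ) : Ideal (integerRing hna) where
  carrier := {x | ρ x < 1}
  add_mem' {x y} hx hy := (hna x y).trans_lt (max_lt hx hy)
  zero_mem' := by simp
  smul_mem' c x hx := (ρ.map_mul c x).trans_lt (mul_lt_one_of_nonneg_of_lt_one_right c.2
    (ρ.nonneg _) hx)

instance (hna : IsNonarchimedean ρ) : (openUnitBallIdeal hna).IsTwoSided where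
  mul_mem_of_left {x} c hx := (ρ.map_mul x c).trans_lt (mul_lt_one_of_nonneg_of_lt_one_left
    (ρ.nonneg _) hx c.2)

lemma residue_eq_iff (hna : IsNonarchimedean ρ) {x y : integerRing hna} :
    Ideal.Quotient.mk (openUnitBallIdeal hna) x = Ideal.Quotient.mk (openUnitBallIdeal hna) y ↔
      ρ ((x : R) - y) < 1 :=
  Ideal.Quotient.eq

lemma finite_residueRing (hna : IsNonarchimedean ρ)
    [Finite (Quot fun a b : {x | ρ x ≤ 1} => ρ ((a : R) - b) < 1)] :
    Finite (integerRing hna ⧸ openUnitBallIdeal hna) := by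
  let f : Quot (fun a b : {x | ρ x ≤ 1} => ρ ((a : R) - b) < 1) →
      integerRing hna ⧸ openUnitBallIdeal hna :=
    Quot.lift (fun a => Ideal.Quotient.mk _ ⟨a, a.2⟩) fun _ _ h => (residue_eq_iff hna).2 h
  refine Finite.of_surjective f fun y => ?_
  obtain ⟨x, rfl⟩ := Ideal.Quotient.mk_surjective y
  exact ⟨Quot.mk _ ⟨x, x.2⟩, rfl⟩

instance (hna : IsNonarchimedean ρ) : IsDomain (integerRing hna ⧸ openUnitBallIdeal hna) := by
  have hzero (x : integerRing hna) :
      Ideal.Quotient.mk (openUnitBallIdeal hna) x = 0 ↔ ρ (x : R) < 1 :=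
    Ideal.Quotient.eq_zero_iff_mem
  have : Nontrivial (integerRing hna ⧸ openUnitBallIdeal hna) :=
    ⟨Ideal.Quotient.mk _ 1, 0, fun h => ((hzero 1).1 h).ne ρ.map_one⟩
  have : NoZeroDivisors (integerRing hna ⧸ openUnitBallIdeal hna) := by
    refine ⟨fun {x y} hxy => ?_⟩
    obtain ⟨x, rfl⟩ := Ideal.Quotient.mk_surjective x
    obtain ⟨y, rfl⟩ := Ideal.Quotient.mk_surjective y
    rw [← map_mul, hzero, Subring.coe_mul, ρ.map_mul] at hxy
    rw [hzero, hzero]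
    by_contra! hlt
    exact hxy.not_ge (one_le_mul_of_one_le_of_one_le hlt.1 hlt.2)
  exact NoZeroDivisors.to_isDomain _

lemma exists_abv_natCast_lt_one_and_abv_pow_sub_lt_one (hna : IsNonarchimedean ρ)
    [Finite (integerRing hna ⧸ openUnitBallIdeal hna)] :
    ∃ q : ℕ, ρ (q : R) < 1 ∧ ∀ x, ρ x ≤ 1 → ρ (x ^ q - x) < 1 := by
  classical
  let := Fintype.ofFinite (integerRing hna ⧸ openUnitBallIdeal hna)
  let := Fintype.groupWithZeroOfCancel (integerRing hna ⧸ openUnitBallIdeal hna)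
  set q := Fintype.card (integerRing hna ⧸ openUnitBallIdeal hna)
  refine ⟨q, ?_, fun x hx => ?_⟩
  · have hcast : Ideal.Quotient.mk (openUnitBallIdeal hna) (q : integerRing hna) = 0 := by
      rw [map_natCast]
      exact Nat.cast_card_eq_zero _
    exact Ideal.Quotient.eq_zero_iff_mem.1 hcast
  · have hpow : Ideal.Quotient.mk (openUnitBallIdeal hna) (⟨x, hx⟩ ^ q) =
        Ideal.Quotient.mk (openUnitBallIdeal hna) ⟨x, hx⟩ := by
      rw [map_pow]
      exact FiniteField.pow_card _
    exact (residue_eq_iff hna).1 hpow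

end ResidueRing

section Commutators

/-- All commutators of integers have absolute value at most `C`. For `C = ρ π ^ n` this says that
`O / πⁿ O` is commutative. -/
def LieBounded {R : Type*} [Ring R] (ρ : AbsoluteValue R ℝ) (C : ℝ) : Prop :=
  ∀ x y, ρ x ≤ 1 → ρ y ≤ 1 → ρ ⁅x, y⁆ ≤ C

lemma mul_lie_leibniz {R : Type*} [Ring R] (x y z : R) :
    ⁅x * y, z⁆ = x * ⁅y, z⁆ + ⁅x, z⁆ * y := by
  simp only [Ring.lie_def]
  noncomm_ring

-- If `x` commuted with `⁅x, y⁆`, then `⁅xᵐ, y⁆` would be `m xᵐ⁻¹ ⁅x, y⁆`.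
lemma abv_lie_pow_succ_sub_le {R : Type*} [Ring R] {ρ : AbsoluteValue R ℝ}
    (hna : IsNonarchimedean ρ) {x y : R} {C : ℝ} (hx : ρ x ≤ 1)
    (hC : ∀ k, ρ ⁅x ^ k, ⁅x, y⁆⁆ ≤ C) (m : ℕ) :
    ρ (⁅x ^ (m + 1), y⁆ - (m + 1 : ℕ) * (x ^ m * ⁅x, y⁆)) ≤ C := by
  induction m with
  | zero => simpa using (ρ.nonneg _).trans (hC 0)
  | succ m ih =>
    have hsucc : ⁅x ^ (m + 2), y⁆ - (m + 2 : ℕ) * (x ^ (m + 1) * ⁅x, y⁆) =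
        x * (⁅x ^ (m + 1), y⁆ - (m + 1 : ℕ) * (x ^ m * ⁅x, y⁆)) - ⁅x ^ (m + 1), ⁅x, y⁆⁆ := by
      rw [pow_succ' x (m + 1), mul_lie_leibniz, Ring.lie_def (x ^ (m + 1)) ⁅x, y⁆, mul_sub,
        (Nat.cast_commute (m + 1) x).symm.left_comm, ← mul_assoc x (x ^ m), ← pow_succ']
      push_cast
      noncomm_ring
    rw [hsucc]
    exact abv_sub_le_of_le hna (one_mul C ▸ abv_mul_le_of_le hx ih) (hC (m + 1))

/-- `π` is an element of maximal absolute value in the maximal ideal of the valuation ring, and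
that ideal is nonzero. -/
structure IsUniformizer (ρ : AbsoluteValue B ℝ) (π : B) : Prop where
  pos : 0 < ρ π
  lt_one : ρ π < 1
  le_of_lt_one : ∀ x ≠ 0, ρ x < 1 → ρ x ≤ ρ π

variable {ρ : AbsoluteValue B ℝ} {π : B} {n : ℕ}

lemma IsUniformizer.abv_le (hπ : IsUniformizer ρ π) {x : B} (hx : ρ x < 1) : ρ x ≤ ρ π := by
  rcases eq_or_ne x 0 with rfl | hx₀
  · simp
  · exact hπ.le_of_lt_one x hx₀ hx

lemma IsUniformizer.exists_eq_mul (hπ : IsUniformizer ρ π) {x : B} {C : ℝ}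
    (hx : ρ x ≤ ρ π * C) : ∃ z, ρ z ≤ C ∧ x = π * z := by
  refine ⟨π⁻¹ * x, ?_, (mul_inv_cancel_left₀ (ρ.pos_iff.1 hπ.pos) x).symm⟩
  rwa [ρ.map_mul, map_inv₀, inv_mul_le_iff₀ hπ.pos]

lemma LieBounded.abv_lie_le_pow_succ (h : LieBounded ρ (ρ π ^ 2)) (hna : IsNonarchimedean ρ)
    (hπ : IsUniformizer ρ π) {x y : B} (hx : ρ x ≤ ρ π ^ n) (hy : ρ y ≤ 1) :
    ρ ⁅x, y⁆ ≤ ρ π ^ (n + 1) := by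
  induction n generalizing x with
  | zero =>
    exact (h x y (by simpa using hx) hy).trans
      (pow_le_pow_of_le_one hπ.pos.le hπ.lt_one.le one_le_two)
  | succ n ih =>
    obtain ⟨z, hz, rfl⟩ := hπ.exists_eq_mul (pow_succ' (ρ π) n ▸ hx)
    rw [mul_lie_leibniz]
    refine abv_add_le_of_le hna ?_ ?_
    · exact pow_succ' (ρ π) (n + 1) ▸ abv_mul_le_of_le le_rfl (ih hz)
    · rw [show n + 1 + 1 = 2 + n by ring, pow_add]
      exact abv_mul_le_of_le (h π y hπ.lt_one.le hy) hz

lemma LieBounded.abv_lie_pow_le (h : LieBounded ρ (ρ π ^ n)) (h₂ : LieBounded ρ (ρ π ^ 2))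
    (hna : IsNonarchimedean ρ) (hπ : IsUniformizer ρ π) {q : ℕ} (hq : ρ (q : B) ≤ ρ π) {x y : B}
    (hx : ρ x ≤ 1) (hy : ρ y ≤ 1) : ρ ⁅x ^ q, y⁆ ≤ ρ π ^ (n + 1) := by
  rcases q with - | m
  · simp [Ring.lie_def]
  have hderiv := abv_lie_pow_succ_sub_le hna hx (y := y) (C := ρ π ^ (n + 1)) (fun k => by
    rw [Ring.lie_def, ρ.map_sub, ← Ring.lie_def]
    exact h₂.abv_lie_le_pow_succ hna hπ (h x y hx hy) (abv_pow_le_one hx k)) m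
  have hmul : ρ ((m + 1 : ℕ) * (x ^ m * ⁅x, y⁆)) ≤ ρ π ^ (n + 1) := by
    rw [pow_succ', ← one_mul (ρ π ^ n)]
    exact abv_mul_le_of_le hq (abv_mul_le_of_le (abv_pow_le_one hx m) (h x y hx hy))
  simpa using abv_add_le_of_le hna hderiv hmul

lemma LieBounded.abv_lie_le_of_abv_uniformizer_lie_le (h : LieBounded ρ (ρ π ^ n))
    (h₂ : LieBounded ρ (ρ π ^ 2)) (hna : IsNonarchimedean ρ) (hπ : IsUniformizer ρ π) {q : ℕ}
    (hq : ρ (q : B) < 1) (hfrob : ∀ x, ρ x ≤ 1 → ρ (x ^ q - x) < 1) {x y : B} (hx : ρ x ≤ 1)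
    (hy : ρ y ≤ 1) (hπy : ρ ⁅π, y⁆ ≤ ρ π ^ (n + 1)) : ρ ⁅x, y⁆ ≤ ρ π ^ (n + 1) := by
  obtain ⟨z, hz, hxz⟩ := hπ.exists_eq_mul (x := x ^ q - x) (C := 1)
    (by simpa using hπ.abv_le (hfrob x hx))
  have hsplit : ⁅x, y⁆ = ⁅x ^ q, y⁆ - (π * ⁅z, y⁆ + ⁅π, y⁆ * z) := by
    rw [← mul_lie_leibniz, ← hxz]
    simp only [Ring.lie_def, sub_mul, mul_sub]
    abel
  rw [hsplit]
  refine abv_sub_le_of_le hna (h.abv_lie_pow_le h₂ hna hπ (hπ.abv_le hq) hx hy)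
    (abv_add_le_of_le hna ?_ ?_)
  · exact pow_succ' (ρ π) n ▸ abv_mul_le_of_le le_rfl (h z y hz hy)
  · exact mul_one (ρ π ^ (n + 1)) ▸ abv_mul_le_of_le hπy hz

lemma LieBounded.succ (h : LieBounded ρ (ρ π ^ n)) (h₂ : LieBounded ρ (ρ π ^ 2))
    (hna : IsNonarchimedean ρ) (hπ : IsUniformizer ρ π) {q : ℕ} (hq : ρ (q : B) < 1)
    (hfrob : ∀ x, ρ x ≤ 1 → ρ (x ^ q - x) < 1) : LieBounded ρ (ρ π ^ (n + 1)) := by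
  have hπ_lie {y : B} (hy : ρ y ≤ 1) : ρ ⁅π, y⁆ ≤ ρ π ^ (n + 1) := by
    rw [Ring.lie_def, ρ.map_sub, ← Ring.lie_def]
    refine h.abv_lie_le_of_abv_uniformizer_lie_le h₂ hna hπ hq hfrob hy hπ.lt_one.le ?_
    simp [Ring.lie_def]
  exact fun x y hx hy =>
    h.abv_lie_le_of_abv_uniformizer_lie_le h₂ hna hπ hq hfrob hx hy (hπ_lie hy)

lemma commute_of_forall_integer_commute (h : ∀ x y : B, ρ x ≤ 1 → ρ y ≤ 1 → Commute x y)
    (x y : B) : Commute x y := by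
  wlog hx : ρ x ≤ 1 generalizing x
  · refine Commute.inv_left_iff₀.1 (this x⁻¹ ?_)
    rw [map_inv₀]
    exact inv_le_one_of_one_le₀ (not_le.1 hx).le
  wlog hy : ρ y ≤ 1 generalizing y
  · refine Commute.inv_right_iff₀.1 (this y⁻¹ ?_)
    rw [map_inv₀]
    exact inv_le_one_of_one_le₀ (not_le.1 hy).le
  exact h x y hx hy

lemma LieBounded.commute (h : LieBounded ρ (ρ π ^ 2)) (hna : IsNonarchimedean ρ)
    (hπ : IsUniformizer ρ π) [Finite (integerRing hna ⧸ openUnitBallIdeal hna)] (x y : B) :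
    Commute x y := by
  obtain ⟨q, hq, hfrob⟩ := exists_abv_natCast_lt_one_and_abv_pow_sub_lt_one hna
  have hbound (n : ℕ) : LieBounded ρ (ρ π ^ n) := by
    induction n with
    | zero =>
      exact fun x y hx hy => (h x y hx hy).trans
        (pow_le_pow_of_le_one hπ.pos.le hπ.lt_one.le zero_le_two)
    | succ n ih => exact ih.succ h hna hπ hq hfrob
  refine commute_of_forall_integer_commute (ρ := ρ) (fun x y hx hy => ?_) x y
  rw [commute_iff_lie_eq]
  by_contra hne
  obtain ⟨n, hn⟩ := exists_pow_lt_of_lt_one (ρ.pos hne) hπ.lt_one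
  exact hn.not_ge (hbound n x y hx hy)

end Commutators

theorem congruence_order_not_intersection_of_three_general {ρ : AbsoluteValue B ℝ}
    (hna : IsNonarchimedean ρ) {π : B} (hπ : IsUniformizer ρ π)
    [Finite (integerRing hna ⧸ openUnitBallIdeal hna)] (hnoncomm : ∃ x y : B, x * y ≠ y * x)
    {t : ℕ} (ht : 2 ≤ t) {Δ₁ Δ₂ Δ₃ : Set (Matrix (Fin 2) (Fin 2) B)} (h₁ : IsMaxOrder ρ Δ₁)
    (h₂ : IsMaxOrder ρ Δ₂) (h₃ : IsMaxOrder ρ Δ₃) :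
    ¬ Δ₁ ∩ Δ₂ ∩ Δ₃ ⊆ congruenceOrder ρ π t := by
  intro hsub
  obtain ⟨g, hg⟩ := exists_forall_conj_scalar_mem_inter hna h₁ h₂ h₃
  have hlie : LieBounded ρ (ρ π ^ 2) := fun x y hx hy =>
    (abv_lie_le_of_forall_conj_scalar_mem_congruenceOrder hna g
      (fun z hz => hsub (hg z hz)) hx hy).trans (pow_le_pow_of_le_one hπ.pos.le hπ.lt_one.le ht)
  obtain ⟨x, y, hxy⟩ := hnoncomm
  exact hxy (hlie.commute hna hπ x y)

/-- Theorem 1.2, key part: let B be a noncommutative central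
division algebra over a local field.  The order Δ₀^{[2]} (integral matrices
central modulo M²) is not the intersection of any three maximal orders of
M₂(B). -/
theorem congruence_order_not_intersection_of_three
    (ρ : AbsoluteValue B ℝ) (hna : IsNonarchimedean ρ)
    (πB : B)
    (hπB : 0 < ρ πB ∧ ρ πB < 1 ∧ ∀ x : B, x ≠ 0 → ρ x < 1 → ρ x ≤ ρ πB)
    (hdisc : ∀ x : B, x ≠ 0 → ∃ k : ℤ, ρ x = ρ πB ^ k)
    (hfinres : ∀ S : Set B, S = {x | ρ x ≤ 1} →
      Nat.card (Quot (fun a b : S => ρ ((a : B) - b) < 1)) ≠ 0)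
    (hnoncomm : ∃ x y : B, x * y ≠ y * x) :
    ¬ ∃ Δ₁ Δ₂ Δ₃ : Set (Matrix (Fin 2) (Fin 2) B),
        IsMaxOrder ρ Δ₁ ∧ IsMaxOrder ρ Δ₂ ∧ IsMaxOrder ρ Δ₃ ∧
        congruenceOrder ρ πB 2 = Δ₁ ∩ Δ₂ ∩ Δ₃ := by
  rintro ⟨Δ₁, Δ₂, Δ₃, h₁, h₂, h₃, h⟩
  have := Nat.finite_of_card_ne_zero (hfinres _ rfl)
  have := finite_residueRing hna
  exact congruence_order_not_intersection_of_three_general hna ⟨hπB.1, hπB.2.1, hπB.2.2⟩ hnoncomm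
    le_rfl h₁ h₂ h₃ h.ge

end
end
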